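/- Let β ∈ ℝ and M > 0. Let 𝔔 : ℝ × ℝ → ℂ possess partial derivatives ∂_x^j ∂_k^ρ 𝔔 for j, ρ ∈ {0,1}, with |⟨x⟩^β ∂_x^j ∂_k^ρ 𝔔(x,k)| ≤ M for all j, ρ ∈ {0,1} and all x, k. Assume moreover that for each j, ρ ∈ {0,1} the linear map g ↦ ( x ↦ ∫_ℝ e^{ikx} ⟨x⟩^β (∂_x^j ∂_k^ρ 𝔔)(x,k) g(k) dk ) is bounded from L²(ℝ) to L²(ℝ) with operator norm at most M. Then there exists C > 0 depending only on M such that for every t ≥ 1 and every Schwartz function h : ℝ → ℂ: ( ∫_ℝ ⟨x⟩^{2(β−1)} | ∂_x ∫_0^∞ e^{ikx} 𝔔(x,k) e^{ik²t} h(k) dk |² dx )^{1/2} ≤ C t^{−1/2} ‖h‖_{H¹(ℝ)}. -/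

import Mathlib

open MeasureTheory Filter Topology Set

noncomputable def jap (x : ℝ) : ℝ := Real.sqrt (1 + x ^ 2)

/-!
The flow is the pseudo-differential operator with symbol `𝔔` applied to `𝟙_{k > 0} e^{ik²t} h(k)`,
and its `x`-derivative splits into a term with symbol `∂_x 𝔔` and a term with symbol `ik 𝔔`.

In the second one, `∂_k e^{ikx + ik²t} = i(x + 2tk) e^{ikx + ik²t}`, so that integrating by parts
trades `2tk` for a boundary term at `k = 0`, for the factor `x`, which the spare weight `⟨x⟩⁻¹`
absorbs, and for a `k`-derivative of `𝔔 h`. This gains a factor `1/t` and leaves `L²` bounds for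
operators whose symbols are bounded together with their derivatives. With the weight `⟨x⟩⁻¹` to
spare, such a bound follows from Plancherel on each unit interval, on which the symbol is frozen at
one point at the cost of an `x`-derivative. Without it, one first replaces `g`, for `x` in the
`n`-th unit interval, by the solution `v` of `v' + (1 + in) v = g`, which moves a derivative onto
the symbol. Since this divides the transform of `g` by `1 + i(n - x)`, the contributions of the
intervals become summable.

The term with symbol `∂_x 𝔔` is `O(t^{-1/2})` pointwise after multiplication by `⟨x⟩^β`, by a van
der Corput estimate: the phase is `t (k + c)²` up to a constant, with `c = x / 2t`, and one
integrates by parts against the regularization `s / (1 + ts²)` of `1 / (ts)`.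
-/

section FourierIntegral

/-- The Fourier integral `x ↦ ∫ e^{ikx} f(k) dk`, in the unnormalized convention of the theorem. -/
noncomputable def fourierExp (f : ℝ → ℂ) (x : ℝ) : ℂ :=
  ∫ k : ℝ, Complex.exp (Complex.I * (k : ℂ) * (x : ℂ)) * f k

variable {f g : ℝ → ℂ}

theorem norm_exp_I_mul_mul (k x : ℝ) : ‖Complex.exp (Complex.I * (k : ℂ) * (x : ℂ))‖ = 1 := by
  simp [Complex.norm_exp]

theorem integrable_exp_mul (hf : Integrable f) (x : ℝ) :
    Integrable (fun k : ℝ => Complex.exp (Complex.I * (k : ℂ) * (x : ℂ)) * f k) :=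
  hf.bdd_mul (c := 1) (by fun_prop) (Eventually.of_forall fun k => (norm_exp_I_mul_mul k x).le)

theorem fourierExp_add (hf : Integrable f) (hg : Integrable g) (x : ℝ) :
    fourierExp (fun k => f k + g k) x = fourierExp f x + fourierExp g x := by
  simp only [fourierExp, mul_add]
  exact integral_add (integrable_exp_mul hf x) (integrable_exp_mul hg x)

theorem fourierExp_sub (hf : Integrable f) (hg : Integrable g) (x : ℝ) :
    fourierExp (fun k => f k - g k) x = fourierExp f x - fourierExp g x := by
  simp only [fourierExp, mul_sub]
  exact integral_sub (integrable_exp_mul hf x) (integrable_exp_mul hg x)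

theorem fourierExp_const_mul (c : ℂ) (f : ℝ → ℂ) (x : ℝ) :
    fourierExp (fun k => c * f k) x = c * fourierExp f x := by
  simp only [fourierExp, mul_left_comm _ c, integral_const_mul]

open scoped FourierTransform in
theorem fourierExp_eq_fourier (f : ℝ → ℂ) (x : ℝ) :
    fourierExp f x = 𝓕 f (-(2 * Real.pi)⁻¹ * x) := by
  rw [Real.fourier_real_eq_integral_exp_smul, fourierExp]
  congr 1 with k
  rw [smul_eq_mul]
  congr 2
  push_cast
  field_simp

theorem measurable_fourierExp {X : Type*} [MeasurableSpace X] {F : X → ℝ → ℂ} {y : X → ℝ}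
    (hF : Measurable (Function.uncurry F)) (hy : Measurable y) :
    Measurable (fun z => fourierExp (F z) (y z)) := by
  have h : Measurable (Function.uncurry fun (z : X) (k : ℝ) =>
      Complex.exp (Complex.I * (k : ℂ) * (y z : ℂ)) * F z k) := by
    refine Measurable.mul ?_ hF
    have : Measurable fun p : X × ℝ => y p.1 := hy.comp measurable_fst
    fun_prop
  exact (h.stronglyMeasurable.integral_prod_right (ν := volume)).measurable

open scoped FourierTransform SchwartzMap in
-- Integrating against a test function moves both transforms onto it.
theorem fourier_ae_eq_fourier_toLp (hf : Integrable f) (hf₂ : MemLp f 2) :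
    𝓕 f =ᵐ[volume] (𝓕 (hf₂.toLp f) : Lp (α := ℝ) ℂ 2 volume) := by
  have hcont : Continuous (𝓕 f) := VectorFourier.fourierIntegral_continuous
    Real.continuous_fourierChar continuous_inner hf
  refine ae_eq_of_integral_contDiff_smul_eq hcont.locallyIntegrable
    ((Lp.memLp _).locallyIntegrable (by norm_num)) fun g hg hgc => ?_
  have hgc' : HasCompactSupport (Complex.ofRealCLM ∘ g) := hgc.comp_left rfl
  have hg' : ContDiff ℝ (⊤ : ℕ∞) (Complex.ofRealCLM ∘ g) := by fun_prop
  set φ : 𝓢(ℝ, ℂ) := hgc'.toSchwartzMap hg' with hφ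
  calc ∫ x, g x • 𝓕 f x = ∫ x, φ x • 𝓕 f x := by simp [hφ]
    _ = ∫ x, (𝓕 φ : 𝓢(ℝ, ℂ)) x • f x := by
      have := VectorFourier.integral_fourierIntegral_smul_eq_flip (L := innerₗ ℝ)
        (f := (φ : ℝ → ℂ)) (g := f) (μ := volume) (ν := volume)
        Real.continuous_fourierChar continuous_inner φ.integrable hf
      rw [flip_innerₗ] at this
      rw [SchwartzMap.fourier_coe]
      exact this.symm
    _ = Lp.toTemperedDistribution (𝓕 (hf₂.toLp f)) φ := by
      rw [← Lp.fourier_toTemperedDistribution_eq, TemperedDistribution.fourier_apply,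
        Lp.toTemperedDistribution_apply]
      refine integral_congr_ae ?_
      filter_upwards [hf₂.coeFn_toLp] with x hx
      rw [hx]
    _ = ∫ x, g x • (𝓕 (hf₂.toLp f) : Lp (α := ℝ) ℂ 2 volume) x := by simp [hφ]

theorem lintegral_enorm_sq_eq_eLpNorm_sq {X : Type*} [MeasurableSpace X] {μ : Measure X}
    (f : X → ℂ) : ∫⁻ x, ‖f x‖ₑ ^ 2 ∂μ = eLpNorm f 2 μ ^ 2 := by
  simpa using (eLpNorm_nnreal_pow_eq_lintegral (f := f) (μ := μ) (p := 2) two_ne_zero).symm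

open scoped FourierTransform in
theorem lintegral_enorm_fourier_sq (hf : Integrable f) (hf₂ : MemLp f 2) :
    ∫⁻ x : ℝ, ‖𝓕 f x‖ₑ ^ 2 = ∫⁻ k, ‖f k‖ₑ ^ 2 := by
  rw [lintegral_enorm_sq_eq_eLpNorm_sq, lintegral_enorm_sq_eq_eLpNorm_sq,
    eLpNorm_congr_ae (fourier_ae_eq_fourier_toLp hf hf₂), ← Lp.enorm_def, ← ofReal_norm,
    Lp.norm_fourier_eq, ofReal_norm, Lp.enorm_toLp]

theorem lintegral_enorm_fourierExp_sq (hf : Integrable f) (hf₂ : MemLp f 2) :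
    ∫⁻ x, ‖fourierExp f x‖ₑ ^ 2 = ENNReal.ofReal (2 * Real.pi) * ∫⁻ k, ‖f k‖ₑ ^ 2 := by
  have hc : -(2 * Real.pi)⁻¹ ≠ 0 := by simp [Real.pi_ne_zero]
  have hchange := (Homeomorph.mulLeft₀ _ hc).measurableEmbedding.lintegral_map (μ := volume)
    (fun y => ‖FourierTransform.fourier f y‖ₑ ^ 2)
  simp only [Homeomorph.coe_mulLeft₀] at hchange
  simp_rw [fourierExp_eq_fourier]
  rw [← hchange, Real.map_volume_mul_left hc, lintegral_smul_measure, smul_eq_mul,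
    lintegral_enorm_fourier_sq hf hf₂, inv_neg, inv_inv, abs_neg, abs_of_pos Real.two_pi_pos]

end FourierIntegral

section Weight

/-- A weight which is monotone or antitone between consecutive integers. This replaces the family
`⟨x⟩^β`: estimates on a unit interval then lose no constant depending on `β`. -/
structure IsWeight (w : ℝ → ℝ) : Prop where
  pos : ∀ x, 0 < w x
  continuous : Continuous w
  monotoneOn_or_antitoneOn : ∀ n : ℤ,
    MonotoneOn w (Icc (n : ℝ) (n + 1)) ∨ AntitoneOn w (Icc (n : ℝ) (n + 1))

variable {w : ℝ → ℝ}

theorem IsWeight.exists_forall_uIcc_le (hw : IsWeight w) (n : ℤ) :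
    ∃ e ∈ Icc (n : ℝ) (n + 1), ∀ x ∈ Icc (n : ℝ) (n + 1), ∀ y ∈ uIcc e x, w x ≤ w y := by
  rcases hw.monotoneOn_or_antitoneOn n with hmono | hanti
  · refine ⟨n + 1, by simp, fun x hx y hy => ?_⟩
    rw [uIcc_of_ge hx.2] at hy
    exact hmono hx ⟨hx.1.trans hy.1, hy.2⟩ hy.1
  · refine ⟨n, by simp, fun x hx y hy => ?_⟩
    rw [uIcc_of_le hx.1] at hy
    exact hanti ⟨hy.1, hy.2.trans hx.2⟩ hx hy.2

theorem IsWeight.eventually_half_le (hw : IsWeight w) (x : ℝ) : ∀ᶠ y in 𝓝 x, w x / 2 ≤ w y :=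
  hw.continuous.continuousAt.eventually_const_le (half_lt_self (hw.pos x))

theorem jap_pos (x : ℝ) : 0 < jap x := Real.sqrt_pos.mpr (by positivity)

theorem jap_sq (x : ℝ) : jap x ^ 2 = 1 + x ^ 2 := Real.sq_sqrt (by positivity)

theorem abs_le_jap (x : ℝ) : |x| ≤ jap x := Real.abs_le_sqrt (by linarith)

theorem continuous_jap : Continuous jap := by
  unfold jap
  fun_prop

theorem monotoneOn_jap : MonotoneOn jap (Ici 0) := fun x hx y _ hxy =>
  Real.sqrt_le_sqrt (by gcongr)

theorem antitoneOn_jap : AntitoneOn jap (Iic 0) := fun x _ y hy hxy =>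
  Real.sqrt_le_sqrt (by nlinarith [mem_Iic.mp hy])

theorem isWeight_jap_rpow (β : ℝ) : IsWeight (fun x => jap x ^ β) where
  pos x := Real.rpow_pos_of_pos (jap_pos x) β
  continuous := continuous_jap.rpow_const fun x => Or.inl (jap_pos x).ne'
  monotoneOn_or_antitoneOn n := by
    have hjap : MonotoneOn jap (Icc (n : ℝ) (n + 1)) ∨ AntitoneOn jap (Icc (n : ℝ) (n + 1)) := by
      rcases le_or_gt 0 n with hn | hn
      · exact Or.inl (monotoneOn_jap.mono fun x hx => le_trans (by exact_mod_cast hn) hx.1)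
      · exact Or.inr (antitoneOn_jap.mono fun x hx => hx.2.trans (by exact_mod_cast hn))
    rcases le_total 0 β with hβ | hβ
    · have hpow := Real.monotoneOn_rpow_Ici_of_exponent_nonneg hβ
      exact hjap.imp (fun h x hx y hy hxy => hpow (jap_pos x).le (jap_pos y).le (h hx hy hxy))
        (fun h x hx y hy hxy => hpow (jap_pos y).le (jap_pos x).le (h hx hy hxy))
    · have hpow := Real.antitoneOn_rpow_Ioi_of_exponent_nonpos hβ
      exact hjap.symm.imp (fun h x hx y hy hxy => hpow (jap_pos y) (jap_pos x) (h hx hy hxy))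
        (fun h x hx y hy hxy => hpow (jap_pos x) (jap_pos y) (h hx hy hxy))

end Weight

section Symbol

/-- The derivative `∂_x q(x, k)` of a symbol. -/
noncomputable def derivFst (q : ℝ → ℝ → ℂ) (x k : ℝ) : ℂ := deriv (fun y => q y k) x

/-- The derivative `∂_k q(x, k)` of a symbol. -/
noncomputable def derivSnd (q : ℝ → ℝ → ℂ) (x k : ℝ) : ℂ := deriv (q x) k

/-- The symbol `q(x, k)` is measurable and `|w(x) q(x, k)| ≤ M`. -/
structure IsBoundedSymbol (w : ℝ → ℝ) (M : ℝ) (q : ℝ → ℝ → ℂ) : Prop where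
  measurable_uncurry : Measurable (Function.uncurry q)
  weight_mul_norm_le : ∀ x k, w x * ‖q x k‖ ≤ M

/-- The symbol `q(x, k)` is differentiable in `x`, and both `w q` and `w ∂_x q` are bounded
by `M`. -/
structure IsSymbol (w : ℝ → ℝ) (M : ℝ) (q : ℝ → ℝ → ℂ) : Prop extends IsBoundedSymbol w M q where
  differentiable : ∀ k, Differentiable ℝ fun x => q x k
  bounded_derivFst : IsBoundedSymbol w M (derivFst q)

variable {w : ℝ → ℝ} {M : ℝ} {q : ℝ → ℝ → ℂ} {g : ℝ → ℂ}

-- The Mathlib lemma on parametric derivatives asks for joint continuity, which a symbol lacks.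
theorem measurable_uncurry_derivFst (hq : Measurable (Function.uncurry q))
    (hd : ∀ k, Differentiable ℝ fun x => q x k) : Measurable (Function.uncurry (derivFst q)) := by
  have hquot : Tendsto (fun (n : ℕ) (p : ℝ × ℝ) =>
      ((1 / ((n : ℝ) + 1))⁻¹ : ℝ) • (q (p.1 + 1 / ((n : ℝ) + 1)) p.2 - q p.1 p.2)) atTop
      (𝓝 (Function.uncurry (derivFst q))) := by
    refine tendsto_pi_nhds.mpr fun p => ?_
    have hstep : Tendsto (fun n : ℕ => 1 / ((n : ℝ) + 1)) atTop (𝓝[≠] 0) :=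
      tendsto_nhdsWithin_iff.mpr ⟨tendsto_one_div_add_atTop_nhds_zero_nat,
        Eventually.of_forall fun n => (Nat.one_div_pos_of_nat (α := ℝ)).ne'⟩
    exact (hasDerivAt_iff_tendsto_slope_zero.mp (hd p.2 p.1).hasDerivAt).comp hstep
  refine measurable_of_tendsto_metrizable (fun n => ?_) hquot
  have hshift : Measurable fun p : ℝ × ℝ => q (p.1 + 1 / ((n : ℝ) + 1)) p.2 :=
    hq.comp (by fun_prop : Measurable fun p : ℝ × ℝ => (p.1 + 1 / ((n : ℝ) + 1), p.2))
  exact (hshift.sub hq).const_smul ((1 / ((n : ℝ) + 1))⁻¹ : ℝ)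

theorem IsSymbol.of_bounds (hm : ∀ x, Measurable (q x)) (hd : ∀ k, Differentiable ℝ fun x => q x k)
    (hb : ∀ x k, w x * ‖q x k‖ ≤ M) (hb' : ∀ x k, w x * ‖derivFst q x k‖ ≤ M) :
    IsSymbol w M q :=
  have hq := measurable_uncurry_of_continuous_of_measurable (fun k => (hd k).continuous) hm
  ⟨⟨hq, hb⟩, hd, ⟨measurable_uncurry_derivFst hq hd, hb'⟩⟩

namespace IsBoundedSymbol

theorem norm_le (hq : IsBoundedSymbol w M q) (hw : IsWeight w) (x k : ℝ) : ‖q x k‖ ≤ M / w x :=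
  (le_div_iff₀' (hw.pos x)).mpr (hq.weight_mul_norm_le x k)

theorem nonneg (hq : IsBoundedSymbol w M q) (hw : IsWeight w) : 0 ≤ M :=
  (mul_nonneg (hw.pos 0).le (norm_nonneg _)).trans (hq.weight_mul_norm_le 0 0)

theorem measurable (hq : IsBoundedSymbol w M q) (x : ℝ) : Measurable (q x) :=
  hq.measurable_uncurry.comp measurable_prodMk_left

theorem integrable_mul (hq : IsBoundedSymbol w M q) (hw : IsWeight w) (hg : Integrable g) (x : ℝ) :
    Integrable fun k => q x k * g k :=
  hg.bdd_mul (hq.measurable x).aestronglyMeasurable (Eventually.of_forall (hq.norm_le hw x))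

theorem memLp_mul (hq : IsBoundedSymbol w M q) (hw : IsWeight w) (hg : MemLp g 2) (x : ℝ) :
    MemLp (fun k => q x k * g k) 2 :=
  hg.of_le_mul ((hq.measurable x).aestronglyMeasurable.mul hg.1)
    (Eventually.of_forall fun k => (norm_mul_le _ _).trans
      (mul_le_mul_of_nonneg_right (hq.norm_le hw x k) (norm_nonneg _)))

theorem measurable_mul (hq : IsBoundedSymbol w M q) (hg : Measurable g) :
    Measurable (Function.uncurry fun x k => q x k * g k) :=
  hq.measurable_uncurry.mul (hg.comp measurable_snd)

theorem lintegral_enorm_weight_smul_fourierExp_sq_le (hq : IsBoundedSymbol w M q)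
    (hw : IsWeight w) (hg : Integrable g) (hg₂ : MemLp g 2) (y : ℝ) :
    ∫⁻ x, ‖w y • fourierExp (fun k => q y k * g k) x‖ₑ ^ 2 ≤
      ENNReal.ofReal (2 * Real.pi * M ^ 2) * ∫⁻ k, ‖g k‖ₑ ^ 2 := by
  have hsymbol (k : ℝ) : ‖w y‖ₑ * ‖q y k‖ₑ ≤ ENNReal.ofReal M := by
    rw [← enorm_smul, ← ofReal_norm, norm_smul, Real.norm_of_nonneg (hw.pos y).le]
    exact ENNReal.ofReal_le_ofReal (hq.weight_mul_norm_le y k)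
  calc ∫⁻ x, ‖w y • fourierExp (fun k => q y k * g k) x‖ₑ ^ 2
      = ENNReal.ofReal (2 * Real.pi) * ∫⁻ k, (‖w y‖ₑ * ‖q y k‖ₑ * ‖g k‖ₑ) ^ 2 := by
        simp_rw [enorm_smul, mul_pow, mul_assoc]
        rw [lintegral_const_mul' _ _ (by finiteness), lintegral_const_mul' _ _ (by finiteness),
          lintegral_enorm_fourierExp_sq (hq.integrable_mul hw hg y) (hq.memLp_mul hw hg₂ y),
          mul_left_comm]
        simp_rw [enorm_mul, mul_pow]
    _ ≤ ENNReal.ofReal (2 * Real.pi) * ∫⁻ k, (ENNReal.ofReal M * ‖g k‖ₑ) ^ 2 := by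
        gcongr with k
        exact hsymbol k
    _ = ENNReal.ofReal (2 * Real.pi * M ^ 2) * ∫⁻ k, ‖g k‖ₑ ^ 2 := by
        simp_rw [mul_pow]
        rw [lintegral_const_mul' _ _ (by finiteness), ENNReal.ofReal_mul Real.two_pi_pos.le,
          ENNReal.ofReal_pow (hq.nonneg hw), mul_assoc]

end IsBoundedSymbol

end Symbol

section ParametricDerivative

variable {w : ℝ → ℝ} {M : ℝ} {q : ℝ → ℝ → ℂ} {g : ℝ → ℂ}

namespace IsSymbol

theorem hasDerivAt (hq : IsSymbol w M q) (x k : ℝ) :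
    HasDerivAt (fun y => q y k) (derivFst q x k) x :=
  (hq.differentiable k x).hasDerivAt

theorem hasDerivAt_fourierExp_mul (hq : IsSymbol w M q) (hw : IsWeight w) (hg : Integrable g)
    (x y : ℝ) :
    HasDerivAt (fun z => fourierExp (fun k => q z k * g k) x)
      (fourierExp (fun k => derivFst q y k * g k) x) y := by
  refine (hasDerivAt_integral_of_dominated_loc_of_deriv_le (hw.eventually_half_le y)
    (bound := fun k => M / (w y / 2) * ‖g k‖)
    (Eventually.of_forall fun z => (integrable_exp_mul (hq.integrable_mul hw hg z) x).1)
    (integrable_exp_mul (hq.integrable_mul hw hg y) x)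
    (integrable_exp_mul (hq.bounded_derivFst.integrable_mul hw hg y) x).1
    (Eventually.of_forall fun k z hz => ?_) (hg.norm.const_mul _)
    (Eventually.of_forall fun k z _ => ((hq.hasDerivAt z k).mul_const _).const_mul _)).2
  rw [norm_mul, norm_exp_I_mul_mul, one_mul, norm_mul]
  gcongr
  exact (hq.bounded_derivFst.norm_le hw z k).trans
    (div_le_div_of_nonneg_left (hq.nonneg hw) (half_pos (hw.pos y)) hz)

end IsSymbol

/-- The pseudo-differential operator with symbol `q`,
`(pdo q g)(x) = ∫ e^{ikx} q(x, k) g(k) dk`. -/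
noncomputable def pdo (q : ℝ → ℝ → ℂ) (g : ℝ → ℂ) (x : ℝ) : ℂ := fourierExp (fun k => q x k * g k) x

theorem IsBoundedSymbol.measurable_pdo (hq : IsBoundedSymbol w M q) (hg : Measurable g) :
    Measurable (pdo q g) :=
  measurable_fourierExp (hq.measurable_mul hg) measurable_id

namespace IsSymbol

theorem hasDerivAt_pdo (hq : IsSymbol w M q) (hw : IsWeight w) (hg : Integrable g)
    (hg' : Integrable fun k : ℝ => (k : ℂ) * g k) (x : ℝ) :
    HasDerivAt (pdo q g)
      (Complex.I * pdo q (fun k => (k : ℂ) * g k) x + pdo (derivFst q) g x) x := by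
  have hkg := (hq.integrable_mul hw hg' x).const_mul Complex.I
  have hdg := hq.bounded_derivFst.integrable_mul hw hg x
  have hexp (z k : ℝ) : HasDerivAt (fun y : ℝ => Complex.exp (Complex.I * k * y))
      (Complex.exp (Complex.I * k * z) * (Complex.I * k)) z := by
    simpa using ((hasDerivAt_id (z : ℂ)).const_mul (Complex.I * k)).cexp.comp_ofReal
  rw [pdo, pdo, ← fourierExp_const_mul, ← fourierExp_add hkg hdg]
  refine (hasDerivAt_integral_of_dominated_loc_of_deriv_le (hw.eventually_half_le x)
    (F' := fun y k => Complex.exp (Complex.I * k * y) *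
      (Complex.I * (q y k * ((k : ℂ) * g k)) + derivFst q y k * g k))
    (bound := fun k : ℝ => M / (w x / 2) * (‖(k : ℂ) * g k‖ + ‖g k‖))
    (Eventually.of_forall fun y => (integrable_exp_mul (hq.integrable_mul hw hg y) y).1)
    (integrable_exp_mul (hq.integrable_mul hw hg x) x)
    (integrable_exp_mul (hkg.add hdg) x).1
    (Eventually.of_forall fun k y hy => ?_) ((hg'.norm.add hg.norm).const_mul _)
    (Eventually.of_forall fun k y _ => ?_)).2
  · have hM : M / w y ≤ M / (w x / 2) :=
      div_le_div_of_nonneg_left (hq.nonneg hw) (half_pos (hw.pos x)) hy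
    rw [norm_mul, norm_exp_I_mul_mul, one_mul, mul_add]
    refine (norm_add_le _ _).trans (add_le_add ?_ ?_)
    · rw [norm_mul, Complex.norm_I, one_mul, norm_mul]
      gcongr
      exact (hq.norm_le hw y k).trans hM
    · rw [norm_mul]
      gcongr
      exact (hq.bounded_derivFst.norm_le hw y k).trans hM
  · exact ((hexp y k).mul ((hq.hasDerivAt y k).mul_const (g k))).congr_deriv (by ring)

end IsSymbol

end ParametricDerivative

section LocalEstimate

theorem ennreal_add_sq_le (a b : ENNReal) : (a + b) ^ 2 ≤ 2 * (a ^ 2 + b ^ 2) := by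
  simpa [show (2 : ℝ) - 1 = 1 by norm_num] using
    ENNReal.rpow_add_le_mul_rpow_add_rpow a b (one_le_two (α := ℝ))

theorem lintegral_sq_le_lintegral_sq {X : Type*} [MeasurableSpace X] {μ : Measure X}
    [IsProbabilityMeasure μ] {f : X → ENNReal} (hf : AEMeasurable f μ) :
    (∫⁻ x, f x ∂μ) ^ 2 ≤ ∫⁻ x, f x ^ 2 ∂μ := by
  have hCS := ENNReal.lintegral_mul_le_Lp_mul_Lq μ Real.HolderConjugate.two_two hf
    (aemeasurable_const (b := 1))
  simp only [Pi.mul_apply, mul_one, ENNReal.one_rpow, lintegral_const, measure_univ] at hCS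
  simp only [ENNReal.rpow_two] at hCS
  calc (∫⁻ x, f x ∂μ) ^ 2 ≤ ((∫⁻ x, f x ^ 2 ∂μ) ^ (1 / 2 : ℝ)) ^ 2 := by gcongr
    _ = ∫⁻ x, f x ^ 2 ∂μ := by rw [← ENNReal.rpow_natCast, ← ENNReal.rpow_mul]; simp

variable {w : ℝ → ℝ} {M : ℝ} {q : ℝ → ℝ → ℂ} {g : ℝ → ℂ}

namespace IsSymbol

theorem fourierExp_mul_eq_add_intervalIntegral (hq : IsSymbol w M q) (hw : IsWeight w)
    (hg : Integrable g) (hgm : Measurable g) (x e y : ℝ) :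
    fourierExp (fun k => q y k * g k) x = fourierExp (fun k => q e k * g k) x +
      ∫ z in e..y, fourierExp (fun k => derivFst q z k * g k) x := by
  have hbound (z : ℝ) :
      ‖fourierExp (fun k => derivFst q z k * g k) x‖ ≤ M / w z * ∫ k, ‖g k‖ := by
    rw [← integral_const_mul]
    refine norm_integral_le_of_norm_le (hg.norm.const_mul _) (Eventually.of_forall fun k => ?_)
    rw [norm_mul, norm_exp_I_mul_mul, one_mul, norm_mul]
    gcongr
    exact hq.bounded_derivFst.norm_le hw z k
  have hcont : Continuous fun z => M / w z * ∫ k, ‖g k‖ :=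
    (continuous_const.div hw.continuous fun z => (hw.pos z).ne').mul continuous_const
  have hint : IntervalIntegrable (fun z => fourierExp (fun k => derivFst q z k * g k) x)
      volume e y :=
    (hcont.intervalIntegrable e y).mono_fun'
      (measurable_fourierExp (hq.bounded_derivFst.measurable_mul hgm)
        measurable_const).aestronglyMeasurable (Eventually.of_forall hbound)
  rw [intervalIntegral.integral_eq_sub_of_hasDerivAt
    (fun z _ => hq.hasDerivAt_fourierExp_mul hw hg x z) hint]
  ring

theorem enorm_weight_smul_fourierExp_le (hq : IsSymbol w M q) (hw : IsWeight w)
    (hg : Integrable g) (hgm : Measurable g) {e y : ℝ} (he : ∀ z ∈ uIcc e y, w y ≤ w z) (x : ℝ) :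
    ‖w y • fourierExp (fun k => q y k * g k) x‖ₑ ≤
      ‖w e • fourierExp (fun k => q e k * g k) x‖ₑ +
        ∫⁻ z in uIoc e y, ‖w z • fourierExp (fun k => derivFst q z k * g k) x‖ₑ := by
  have hweight (z : ℝ) (hz : z ∈ uIcc e y) : ‖w y‖ₑ ≤ ‖w z‖ₑ := by
    rw [Real.enorm_of_nonneg (hw.pos y).le, Real.enorm_of_nonneg (hw.pos z).le]
    exact ENNReal.ofReal_le_ofReal (he z hz)
  have hFTC : ‖∫ z in e..y, fourierExp (fun k => derivFst q z k * g k) x‖ₑ ≤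
      ∫⁻ z in uIoc e y, ‖fourierExp (fun k => derivFst q z k * g k) x‖ₑ := by
    rw [← ofReal_norm, intervalIntegral.norm_intervalIntegral_eq, ofReal_norm]
    exact enorm_integral_le_lintegral_enorm _
  rw [hq.fourierExp_mul_eq_add_intervalIntegral hw hg hgm x e y, smul_add]
  refine (enorm_add_le _ _).trans (add_le_add ?_ ?_)
  · rw [enorm_smul, enorm_smul]
    gcongr
    exact hweight e left_mem_uIcc
  · rw [enorm_smul]
    refine (mul_le_mul_right hFTC _).trans ?_
    rw [← lintegral_const_mul' _ _ (by finiteness)]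
    refine setLIntegral_mono' measurableSet_uIoc fun z hz => ?_
    rw [enorm_smul]
    gcongr
    exact hweight z (uIoc_subset_uIcc hz)

theorem enorm_weight_smul_pdo_sq_le (hq : IsSymbol w M q) (hw : IsWeight w) (hg : Integrable g)
    (hgm : Measurable g) {n : ℤ} {e x : ℝ} (he : e ∈ Icc (n : ℝ) (n + 1))
    (hx : x ∈ Ioc (n : ℝ) (n + 1)) (hmax : ∀ z ∈ uIcc e x, w x ≤ w z) :
    ‖w x • pdo q g x‖ₑ ^ 2 ≤ 2 * (‖w e • fourierExp (fun k => q e k * g k) x‖ₑ ^ 2 +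
      ∫⁻ y in Ioc (n : ℝ) (n + 1), ‖w y • fourierExp (fun k => derivFst q y k * g k) x‖ₑ ^ 2) := by
  have : IsProbabilityMeasure (volume.restrict (Ioc (n : ℝ) (n + 1))) := ⟨by simp⟩
  have hsub : uIoc e x ⊆ Ioc (n : ℝ) (n + 1) :=
    Ioc_subset_Ioc (le_min he.1 hx.1.le) (max_le he.2 hx.2)
  have hmeas : Measurable fun y => ‖w y • fourierExp (fun k => derivFst q y k * g k) x‖ₑ :=
    (hw.continuous.measurable.smul
      (measurable_fourierExp (hq.bounded_derivFst.measurable_mul hgm) measurable_const)).enorm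
  refine (pow_le_pow_left' ((hq.enorm_weight_smul_fourierExp_le hw hg hgm hmax x).trans
    (add_le_add_right (lintegral_mono_set hsub) _)) 2).trans
    ((ennreal_add_sq_le _ _).trans ?_)
  gcongr
  exact lintegral_sq_le_lintegral_sq hmeas.aemeasurable

theorem setLIntegral_setLIntegral_derivFst_le (hq : IsSymbol w M q) (hw : IsWeight w)
    (hg : Integrable g) (hg₂ : MemLp g 2) (hgm : Measurable g) (n : ℤ) :
    ∫⁻ x in Ioc (n : ℝ) (n + 1), ∫⁻ y in Ioc (n : ℝ) (n + 1),
        ‖w y • fourierExp (fun k => derivFst q y k * g k) x‖ₑ ^ 2 ≤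
      ENNReal.ofReal (2 * Real.pi * M ^ 2) * ∫⁻ k, ‖g k‖ₑ ^ 2 := by
  have hmeas : Measurable fun p : ℝ × ℝ =>
      ‖w p.2 • fourierExp (fun k => derivFst q p.2 k * g k) p.1‖ₑ ^ 2 :=
    ((hw.continuous.measurable.comp measurable_snd).smul (measurable_fourierExp
      (F := fun (p : ℝ × ℝ) k => derivFst q p.2 k * g k)
      ((hq.bounded_derivFst.measurable_mul hgm).comp
        ((measurable_snd.comp measurable_fst).prodMk measurable_snd))
      measurable_fst)).enorm.pow_const 2
  rw [lintegral_lintegral_swap hmeas.aemeasurable]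
  refine (lintegral_mono fun y => (setLIntegral_le_lintegral _ _).trans
    (hq.bounded_derivFst.lintegral_enorm_weight_smul_fourierExp_sq_le hw hg hg₂ y)).trans ?_
  simp

-- The symbol is frozen where the weight is largest on the interval, so that Plancherel applies.
theorem setLIntegral_Ioc_enorm_weight_smul_pdo_sq_le (hq : IsSymbol w M q) (hw : IsWeight w)
    (hg : Integrable g) (hg₂ : MemLp g 2) (hgm : Measurable g) (n : ℤ) :
    ∫⁻ x in Ioc (n : ℝ) (n + 1), ‖w x • pdo q g x‖ₑ ^ 2 ≤
      ENNReal.ofReal (8 * Real.pi * M ^ 2) * ∫⁻ k, ‖g k‖ₑ ^ 2 := by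
  obtain ⟨e, he, hmax⟩ := hw.exists_forall_uIcc_le n
  have hmeas : Measurable fun x => ‖w e • fourierExp (fun k => q e k * g k) x‖ₑ ^ 2 :=
    ((measurable_fourierExp (F := fun _ k => q e k * g k)
      (((hq.measurable e).mul hgm).comp measurable_snd) measurable_id).const_smul
        (w e)).enorm.pow_const 2
  refine (setLIntegral_mono' measurableSet_Ioc fun x hx => hq.enorm_weight_smul_pdo_sq_le hw hg hgm
    he hx (hmax x (Ioc_subset_Icc_self hx))).trans ?_
  rw [lintegral_const_mul' _ _ (by finiteness), lintegral_add_left hmeas]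
  calc _ ≤ 2 * ((ENNReal.ofReal (2 * Real.pi * M ^ 2) * ∫⁻ k, ‖g k‖ₑ ^ 2) +
        ENNReal.ofReal (2 * Real.pi * M ^ 2) * ∫⁻ k, ‖g k‖ₑ ^ 2) := by
        refine mul_le_mul_right (add_le_add ?_ ?_) 2
        · exact (setLIntegral_le_lintegral _ _).trans
            (hq.lintegral_enorm_weight_smul_fourierExp_sq_le hw hg hg₂ e)
        · exact hq.setLIntegral_setLIntegral_derivFst_le hw hg hg₂ hgm n
    _ = ENNReal.ofReal (8 * Real.pi * M ^ 2) * ∫⁻ k, ‖g k‖ₑ ^ 2 := by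
        rw [show 8 * Real.pi * M ^ 2 = 4 * (2 * Real.pi * M ^ 2) by ring,
          ENNReal.ofReal_mul (p := 4) (by norm_num), ENNReal.ofReal_ofNat]
        ring

end IsSymbol

end LocalEstimate

section LatticeSum

/-- The constant `∑_{n ∈ ℤ} ⟨n⟩⁻²` picked up when estimates on unit intervals are summed. -/
noncomputable def latticeSum : ENNReal := ∑' n : ℤ, ENNReal.ofReal (1 + (n : ℝ) ^ 2)⁻¹

theorem latticeSum_ne_top : latticeSum ≠ ⊤ := by
  have hsq : Summable fun n : ℤ => 1 / (n : ℝ) ^ 2 :=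
    Real.summable_one_div_int_pow.mpr one_lt_two
  refine Summable.tsum_ofReal_ne_top
    ((hsq.add (hasSum_ite_eq 0 (1 : ℝ)).summable).of_nonneg_of_le (fun n => by positivity)
      fun n => ?_)
  rcases eq_or_ne n 0 with rfl | hn
  · simp
  · have hn' : (n : ℝ) ≠ 0 := by exact_mod_cast hn
    rw [if_neg hn, add_zero, one_div]
    exact inv_anti₀ (sq_pos_iff.mpr hn') (by linarith)

theorem inv_one_add_sq_le {a b : ℝ} (h : |a - b| ≤ 1) :
    (1 + a ^ 2)⁻¹ ≤ 3 * (1 + b ^ 2)⁻¹ := by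
  rw [← div_eq_mul_inv, inv_eq_one_div, div_le_div_iff₀ (by positivity) (by positivity)]
  nlinarith [sq_le_one_iff_abs_le_one (a - b) |>.mpr h, sq_nonneg (2 * a - b)]

theorem ofReal_inv_one_add_sq_le {a b : ℝ} (h : |a - b| ≤ 1) :
    ENNReal.ofReal (1 + a ^ 2)⁻¹ ≤ 3 * ENNReal.ofReal (1 + b ^ 2)⁻¹ := by
  rw [← ENNReal.ofReal_ofNat 3, ← ENNReal.ofReal_mul (by norm_num)]
  exact ENNReal.ofReal_le_ofReal (inv_one_add_sq_le h)

theorem tsum_inv_one_add_sub_sq_le (y : ℝ) :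
    ∑' n : ℤ, ENNReal.ofReal (1 + (n - y) ^ 2)⁻¹ ≤ 3 * latticeSum := by
  have hfloor (n : ℤ) : |((n : ℝ) - y) - ((n - ⌊y⌋ : ℤ) : ℝ)| ≤ 1 := by
    rw [abs_le]
    push_cast
    constructor <;> linarith [Int.floor_le y, Int.lt_floor_add_one y]
  calc ∑' n : ℤ, ENNReal.ofReal (1 + (n - y) ^ 2)⁻¹
      ≤ ∑' n : ℤ, 3 * ENNReal.ofReal (1 + ((n - ⌊y⌋ : ℤ) : ℝ) ^ 2)⁻¹ :=
        ENNReal.tsum_le_tsum fun n => ofReal_inv_one_add_sq_le (hfloor n)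
    _ = 3 * latticeSum := by
        rw [ENNReal.tsum_mul_left, latticeSum, ← (Equiv.subRight ⌊y⌋).tsum_eq fun n : ℤ =>
          ENNReal.ofReal (1 + (n : ℝ) ^ 2)⁻¹]
        rfl

theorem lintegral_eq_tsum_setLIntegral_Ioc (F : ℝ → ENNReal) :
    ∫⁻ x, F x = ∑' n : ℤ, ∫⁻ x in Ioc (n : ℝ) (n + 1), F x := by
  rw [← lintegral_iUnion (fun _ => measurableSet_Ioc) (pairwise_disjoint_Ioc_intCast ℝ),
    iUnion_Ioc_intCast, Measure.restrict_univ]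

end LatticeSum

section WeightedEstimate

variable {w : ℝ → ℝ} {M : ℝ} {q : ℝ → ℝ → ℂ} {g : ℝ → ℂ}

theorem enorm_inv_jap_sq (x : ℝ) : ‖(jap x)⁻¹‖ₑ ^ 2 = ENNReal.ofReal (1 + x ^ 2)⁻¹ := by
  rw [Real.enorm_of_nonneg (inv_nonneg.mpr (jap_pos x).le),
    ← ENNReal.ofReal_pow (inv_nonneg.mpr (jap_pos x).le), inv_pow, jap_sq]

theorem IsSymbol.lintegral_enorm_inv_jap_smul_pdo_sq_le (hq : IsSymbol w M q) (hw : IsWeight w)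
    (hg : Integrable g) (hg₂ : MemLp g 2) (hgm : Measurable g) :
    ∫⁻ x, ‖(jap x)⁻¹ • w x • pdo q g x‖ₑ ^ 2 ≤
      3 * latticeSum * (ENNReal.ofReal (8 * Real.pi * M ^ 2) * ∫⁻ k, ‖g k‖ₑ ^ 2) := by
  have hjap (n : ℤ) (x : ℝ) (hx : x ∈ Ioc (n : ℝ) (n + 1)) :
      ‖(jap x)⁻¹‖ₑ ^ 2 ≤ 3 * ENNReal.ofReal (1 + (n : ℝ) ^ 2)⁻¹ := by
    rw [enorm_inv_jap_sq]
    exact ofReal_inv_one_add_sq_le (abs_le.mpr ⟨by linarith [hx.1], by linarith [hx.2]⟩)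
  rw [lintegral_eq_tsum_setLIntegral_Ioc, latticeSum, ← ENNReal.tsum_mul_left,
    ← ENNReal.tsum_mul_right]
  refine ENNReal.tsum_le_tsum fun n => ?_
  calc ∫⁻ x in Ioc (n : ℝ) (n + 1), ‖(jap x)⁻¹ • w x • pdo q g x‖ₑ ^ 2
      ≤ ∫⁻ x in Ioc (n : ℝ) (n + 1),
          3 * ENNReal.ofReal (1 + (n : ℝ) ^ 2)⁻¹ * ‖w x • pdo q g x‖ₑ ^ 2 := by
        refine setLIntegral_mono' measurableSet_Ioc fun x hx => ?_
        rw [enorm_smul, mul_pow]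
        gcongr
        exact hjap n x hx
    _ ≤ 3 * ENNReal.ofReal (1 + (n : ℝ) ^ 2)⁻¹ *
          (ENNReal.ofReal (8 * Real.pi * M ^ 2) * ∫⁻ k, ‖g k‖ₑ ^ 2) := by
        rw [lintegral_const_mul' _ _ (by finiteness)]
        gcongr
        exact hq.setLIntegral_Ioc_enorm_weight_smul_pdo_sq_le hw hg hg₂ hgm n

end WeightedEstimate

section Resolvent

/-- The causal Green's function `𝟙_{u > 0} e^{-(1+iξ)u}` of the operator `d/du + 1 + iξ`. -/
noncomputable def green (ξ : ℝ) : ℝ → ℂ :=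
  (Ioi 0).indicator fun u => Complex.exp (-(1 + Complex.I * ξ) * u)

/-- The solution `v` of `v' + (1 + iξ) v = g` that vanishes at `-∞`. -/
noncomputable def causalResolvent (ξ : ℝ) (g : ℝ → ℂ) (k : ℝ) : ℂ := ∫ s, g s * green ξ (k - s)

variable {ξ : ℝ} {g r : ℝ → ℂ}

theorem norm_exp_neg_one_add_I_mul (ξ u : ℝ) :
    ‖Complex.exp (-(1 + Complex.I * ξ) * u)‖ = Real.exp (-u) := by
  simp [Complex.norm_exp]

theorem norm_green_le_one (ξ u : ℝ) : ‖green ξ u‖ ≤ 1 := by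
  by_cases hu : u ∈ Ioi (0 : ℝ)
  · rw [green, indicator_of_mem hu, norm_exp_neg_one_add_I_mul, Real.exp_le_one_iff]
    exact neg_nonpos.mpr (mem_Ioi.mp hu).le
  · rw [green, indicator_of_notMem hu, norm_zero]
    exact zero_le_one

theorem measurable_green (ξ : ℝ) : Measurable (green ξ) :=
  Measurable.indicator (by fun_prop) measurableSet_Ioi

theorem integrable_green (ξ : ℝ) : Integrable (green ξ) :=
  (integrable_indicator_iff measurableSet_Ioi).mpr
    (integrableOn_exp_mul_complex_Ioi (by simp) 0)

theorem integrable_mul_green_sub (hg : Integrable g) (ξ : ℝ) :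
    Integrable (fun p : ℝ × ℝ => g p.2 * green ξ (p.1 - p.2)) (volume.prod volume) :=
  hg.convolution_integrand (ContinuousLinearMap.mul ℂ ℂ) (integrable_green ξ)

theorem integrable_causalResolvent (hg : Integrable g) (ξ : ℝ) :
    Integrable (causalResolvent ξ g) :=
  (integrable_mul_green_sub hg ξ).integral_prod_left

theorem measurable_causalResolvent (hgm : Measurable g) (ξ : ℝ) :
    Measurable (causalResolvent ξ g) :=
  ((hgm.comp measurable_snd).mul ((measurable_green ξ).comp
    (measurable_fst.sub measurable_snd))).stronglyMeasurable.integral_prod_right'.measurable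

theorem norm_causalResolvent_le (hg : Integrable g) (ξ k : ℝ) :
    ‖causalResolvent ξ g k‖ ≤ ∫ s, ‖g s‖ := by
  refine norm_integral_le_of_norm_le hg.norm (Eventually.of_forall fun s => ?_)
  rw [norm_mul]
  exact mul_le_of_le_one_right (norm_nonneg _) (norm_green_le_one _ _)

theorem memLp_causalResolvent (hg : Integrable g) (ξ : ℝ) : MemLp (causalResolvent ξ g) 2 := by
  have hv := integrable_causalResolvent hg ξ
  refine (memLp_two_iff_integrable_sq_norm hv.1).mpr ?_
  simp_rw [sq]
  exact hv.norm.bdd_mul hv.norm.1 (Eventually.of_forall fun k =>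
    (norm_norm _).trans_le (norm_causalResolvent_le hg ξ k))

theorem integrable_green_sub_mul {F : ℝ → ℂ} {B : ℝ} (hF : Measurable F) (hB : ∀ k, ‖F k‖ ≤ B)
    (ξ s : ℝ) : Integrable fun k => green ξ (k - s) * F k :=
  ((integrable_green ξ).comp_sub_right s).mul_bdd hF.aestronglyMeasurable (Eventually.of_forall hB)

theorem integral_green_sub_mul_sub_deriv {F : ℝ → ℂ} {B B' : ℝ} (hF : Differentiable ℝ F)
    (hB : ∀ k, ‖F k‖ ≤ B) (hB' : ∀ k, ‖(1 + Complex.I * ξ) * F k - deriv F k‖ ≤ B') (s : ℝ) :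
    ∫ k, green ξ (k - s) * ((1 + Complex.I * ξ) * F k - deriv F k) = F s := by
  have hgreen : (fun k => green ξ (k - s) * ((1 + Complex.I * ξ) * F k - deriv F k)) =
      (Ioi s).indicator fun k : ℝ => Complex.exp (-(1 + Complex.I * ξ) * (k - s : ℝ)) *
        ((1 + Complex.I * ξ) * F k - deriv F k) := by
    ext k
    by_cases hk : s < k <;> simp [green, hk]
  have hint : Integrable fun k => green ξ (k - s) * ((1 + Complex.I * ξ) * F k - deriv F k) :=
    integrable_green_sub_mul
      ((hF.continuous.measurable.const_mul _).sub (measurable_deriv F)) hB' ξ s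
  have hderiv (k : ℝ) : HasDerivAt
      (fun k : ℝ => -(Complex.exp (-(1 + Complex.I * ξ) * (k - s : ℝ)) * F k))
      (Complex.exp (-(1 + Complex.I * ξ) * (k - s : ℝ)) *
        ((1 + Complex.I * ξ) * F k - deriv F k)) k := by
    have hexp := ((((hasDerivAt_id k).sub_const s).ofReal_comp.const_mul
      (-(1 + Complex.I * ξ))).cexp.mul (hF k).hasDerivAt).neg
    exact hexp.congr_deriv (by simp only [id_eq]; push_cast; ring)
  have hlim : Tendsto (fun k : ℝ => -(Complex.exp (-(1 + Complex.I * ξ) * (k - s : ℝ)) * F k))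
      atTop (𝓝 0) := by
    have hdecay : Tendsto (fun k => Real.exp (-(k - s)) * B) atTop (𝓝 0) := by
      simpa [sub_eq_add_neg] using (Real.tendsto_exp_neg_atTop_nhds_zero.comp
        (tendsto_atTop_add_const_right atTop (-s) tendsto_id)).mul_const B
    refine squeeze_zero_norm (fun k => ?_) hdecay
    rw [norm_neg, norm_mul, norm_exp_neg_one_add_I_mul]
    gcongr
    exact hB k
  simp_rw [hgreen] at hint ⊢
  rw [integral_indicator measurableSet_Ioi, integral_Ioi_of_hasDerivAt_of_tendsto'
    (fun k _ => hderiv k) ((integrable_indicator_iff measurableSet_Ioi).mp hint) hlim]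
  simp

theorem integral_mul_causalResolvent {ρ : ℝ → ℂ} {B : ℝ} (hg : Integrable g) (hρ : Measurable ρ)
    (hB : ∀ k, ‖ρ k‖ ≤ B) (ξ : ℝ) :
    ∫ k, ρ k * causalResolvent ξ g k = ∫ s, (∫ k, green ξ (k - s) * ρ k) * g s := by
  have hint : Integrable (fun p : ℝ × ℝ => ρ p.1 * (g p.2 * green ξ (p.1 - p.2)))
      (volume.prod volume) :=
    (integrable_mul_green_sub hg ξ).bdd_mul (hρ.comp measurable_fst).aestronglyMeasurable
      (Eventually.of_forall fun p => hB p.1)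
  calc ∫ k, ρ k * causalResolvent ξ g k = ∫ k, ∫ s, ρ k * (g s * green ξ (k - s)) := by
        simp only [causalResolvent, integral_const_mul]
    _ = ∫ s, ∫ k, ρ k * (g s * green ξ (k - s)) := integral_integral_swap hint
    _ = ∫ s, (∫ k, green ξ (k - s) * ρ k) * g s := by
        simp only [← integral_mul_const]
        congr! 4
        ring

theorem integral_mul_eq_integral_mul_causalResolvent {F : ℝ → ℂ} {B B' : ℝ}
    (hg : Integrable g) (hF : Differentiable ℝ F) (hB : ∀ k, ‖F k‖ ≤ B)
    (hB' : ∀ k, ‖(1 + Complex.I * ξ) * F k - deriv F k‖ ≤ B') :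
    ∫ k, F k * g k = ∫ k, ((1 + Complex.I * ξ) * F k - deriv F k) * causalResolvent ξ g k := by
  have hmeas : Measurable fun k => (1 + Complex.I * ξ) * F k - deriv F k :=
    (hF.continuous.measurable.const_mul _).sub (measurable_deriv F)
  rw [integral_mul_causalResolvent hg hmeas hB']
  simp_rw [integral_green_sub_mul_sub_deriv hF hB hB']

theorem hasDerivAt_exp_I_mul_mul (x k : ℝ) :
    HasDerivAt (fun k : ℝ => Complex.exp (Complex.I * k * x))
      (Complex.exp (Complex.I * k * x) * (Complex.I * x)) k := by
  simpa using (((hasDerivAt_id (k : ℂ)).const_mul Complex.I).mul_const (x : ℂ)).cexp.comp_ofReal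

theorem fourierExp_mul_eq_causalResolvent {B B' : ℝ} (hg : Integrable g)
    (hr : Differentiable ℝ r) (hB : ∀ k, ‖r k‖ ≤ B) (hB' : ∀ k, ‖deriv r k‖ ≤ B') (ξ x : ℝ) :
    fourierExp (fun k => r k * g k) x =
      (1 + Complex.I * (ξ - x : ℝ)) * fourierExp (fun k => r k * causalResolvent ξ g k) x -
        fourierExp (fun k => deriv r k * causalResolvent ξ g k) x := by
  set c : ℂ := 1 + Complex.I * (ξ - x : ℝ) with hc
  set F : ℝ → ℂ := fun k => Complex.exp (Complex.I * k * x) * r k with hF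
  have hderiv (k : ℝ) : HasDerivAt F _ k := (hasDerivAt_exp_I_mul_mul x k).mul (hr k).hasDerivAt
  have hρ (k : ℝ) : (1 + Complex.I * ξ) * F k - deriv F k =
      Complex.exp (Complex.I * k * x) * (c * r k - deriv r k) := by
    rw [(hderiv k).deriv, hF, hc]
    push_cast
    ring
  have hρB (k : ℝ) : ‖(1 + Complex.I * ξ) * F k - deriv F k‖ ≤ ‖c‖ * B + B' := by
    rw [hρ, norm_mul, norm_exp_I_mul_mul, one_mul]
    refine (norm_sub_le _ _).trans (add_le_add ?_ (hB' k))
    rw [norm_mul]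
    gcongr
    exact hB k
  have hFB (k : ℝ) : ‖F k‖ ≤ B := by
    rw [hF, norm_mul, norm_exp_I_mul_mul, one_mul]
    exact hB k
  have hv := integrable_causalResolvent hg ξ
  have hrv := hv.bdd_mul hr.continuous.aestronglyMeasurable (Eventually.of_forall hB)
  have hrv' := hv.bdd_mul (measurable_deriv r).aestronglyMeasurable (Eventually.of_forall hB')
  calc fourierExp (fun k => r k * g k) x = ∫ k, F k * g k := by
        simp only [fourierExp, hF, mul_assoc]
    _ = ∫ k, ((1 + Complex.I * ξ) * F k - deriv F k) * causalResolvent ξ g k :=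
        integral_mul_eq_integral_mul_causalResolvent hg
          (fun k => (hderiv k).differentiableAt) hFB hρB
    _ = fourierExp (fun k => c * (r k * causalResolvent ξ g k) -
          deriv r k * causalResolvent ξ g k) x := by
        simp only [hρ, fourierExp]
        congr! 2
        ring
    _ = _ := by rw [fourierExp_sub (hrv.const_mul c) hrv', fourierExp_const_mul]

theorem enorm_one_add_I_mul_sq (s : ℝ) :
    ‖(1 : ℂ) + Complex.I * s‖ₑ ^ 2 = ENNReal.ofReal (1 + s ^ 2) := by
  rw [← ofReal_norm, ← ENNReal.ofReal_pow (norm_nonneg _), ← Complex.normSq_eq_norm_sq,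
    Complex.normSq_apply]
  simp [sq]

theorem enorm_fourierExp_causalResolvent_sq (hg : Integrable g) (ξ x : ℝ) :
    ‖fourierExp (causalResolvent ξ g) x‖ₑ ^ 2 =
      ENNReal.ofReal (1 + (ξ - x) ^ 2)⁻¹ * ‖fourierExp g x‖ₑ ^ 2 := by
  have hid : fourierExp g x =
      (1 + Complex.I * (ξ - x : ℝ)) * fourierExp (causalResolvent ξ g) x := by
    simpa [fourierExp] using fourierExp_mul_eq_causalResolvent (r := fun _ => 1) (B := 1) (B' := 0)
      hg (differentiable_const 1) (by simp) (by simp) ξ x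
  have hpos : 0 < 1 + (ξ - x) ^ 2 := by positivity
  rw [hid, enorm_mul, mul_pow, enorm_one_add_I_mul_sq, ← mul_assoc, ← ENNReal.ofReal_mul
    (inv_nonneg.mpr hpos.le), inv_mul_cancel₀ hpos.ne', ENNReal.ofReal_one, one_mul]

theorem tsum_lintegral_enorm_causalResolvent_sq_le (hg : Integrable g) (hg₂ : MemLp g 2)
    (hgm : Measurable g) :
    ∑' n : ℤ, ∫⁻ k, ‖causalResolvent n g k‖ₑ ^ 2 ≤ 3 * latticeSum * ∫⁻ k, ‖g k‖ₑ ^ 2 := by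
  have hpi : ENNReal.ofReal (2 * Real.pi) ≠ 0 := by simp [Real.pi_pos]
  have hmeas : Measurable (fourierExp g) := measurable_fourierExp (F := fun _ k => g k)
    (hgm.comp measurable_snd) measurable_id
  refine (ENNReal.mul_le_mul_iff_right hpi ENNReal.ofReal_ne_top).mp ?_
  calc ENNReal.ofReal (2 * Real.pi) * ∑' n : ℤ, ∫⁻ k, ‖causalResolvent n g k‖ₑ ^ 2
      = ∑' n : ℤ, ∫⁻ x, ‖fourierExp (causalResolvent n g) x‖ₑ ^ 2 := by
        rw [← ENNReal.tsum_mul_left]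
        refine tsum_congr fun n => (lintegral_enorm_fourierExp_sq
          (integrable_causalResolvent hg n) (memLp_causalResolvent hg n)).symm
    _ = ∫⁻ x, (∑' n : ℤ, ENNReal.ofReal (1 + (n - x) ^ 2)⁻¹) * ‖fourierExp g x‖ₑ ^ 2 := by
        simp_rw [enorm_fourierExp_causalResolvent_sq hg, ← ENNReal.tsum_mul_right]
        exact (lintegral_tsum fun n => by fun_prop).symm
    _ ≤ ∫⁻ x, 3 * latticeSum * ‖fourierExp g x‖ₑ ^ 2 := by
        gcongr with x
        exact tsum_inv_one_add_sub_sq_le x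
    _ = ENNReal.ofReal (2 * Real.pi) * (3 * latticeSum * ∫⁻ k, ‖g k‖ₑ ^ 2) := by
        rw [lintegral_const_mul' _ _ (ENNReal.mul_ne_top (by finiteness) latticeSum_ne_top),
          lintegral_enorm_fourierExp_sq hg hg₂, mul_left_comm]

end Resolvent

section CalderonVaillancourt

variable {w : ℝ → ℝ} {M : ℝ} {q : ℝ → ℝ → ℂ} {g : ℝ → ℂ}

theorem enorm_weight_smul_pdo_sq_le_causalResolvent (hq : IsBoundedSymbol w M q)
    (hq' : IsBoundedSymbol w M (derivSnd q)) (hd : ∀ x, Differentiable ℝ (q x)) (hw : IsWeight w)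
    (hg : Integrable g) {n : ℤ} {x : ℝ} (hx : x ∈ Ioc (n : ℝ) (n + 1)) :
    ‖w x • pdo q g x‖ₑ ^ 2 ≤ 2 * (2 * ‖w x • pdo q (causalResolvent n g) x‖ₑ ^ 2 +
      ‖w x • pdo (derivSnd q) (causalResolvent n g) x‖ₑ ^ 2) := by
  have hfactor : ‖(1 : ℂ) + Complex.I * ((n : ℝ) - x : ℝ)‖ₑ ^ 2 ≤ 2 := by
    rw [enorm_one_add_I_mul_sq, ← ENNReal.ofReal_ofNat]
    exact ENNReal.ofReal_le_ofReal (by nlinarith [hx.1, hx.2])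
  have hsplit : w x • pdo q g x =
      (1 + Complex.I * ((n : ℝ) - x : ℝ)) * w x • pdo q (causalResolvent n g) x -
        w x • pdo (derivSnd q) (causalResolvent n g) x := by
    rw [mul_smul_comm, ← smul_sub]
    exact congrArg (w x • ·) (fourierExp_mul_eq_causalResolvent hg (hd x) (hq.norm_le hw x)
      (hq'.norm_le hw x) n x)
  rw [hsplit]
  refine (pow_le_pow_left' (enorm_sub_le (E := ℂ)) 2).trans ((ennreal_add_sq_le _ _).trans ?_)
  rw [enorm_mul, mul_pow]
  gcongr

theorem IsSymbol.setLIntegral_enorm_weight_smul_pdo_sq_le_causalResolvent (hq : IsSymbol w M q)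
    (hq' : IsSymbol w M (derivSnd q)) (hd : ∀ x, Differentiable ℝ (q x)) (hw : IsWeight w)
    (hg : Integrable g) (hgm : Measurable g) (n : ℤ) :
    ∫⁻ x in Ioc (n : ℝ) (n + 1), ‖w x • pdo q g x‖ₑ ^ 2 ≤
      6 * ENNReal.ofReal (8 * Real.pi * M ^ 2) * ∫⁻ k, ‖causalResolvent n g k‖ₑ ^ 2 := by
  have hv := integrable_causalResolvent hg n
  have hv₂ := memLp_causalResolvent hg n
  have hvm := measurable_causalResolvent hgm n
  have hmeas : Measurable fun x => 2 * ‖w x • pdo q (causalResolvent n g) x‖ₑ ^ 2 :=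
    ((hw.continuous.measurable.smul (hq.measurable_pdo hvm)).enorm.pow_const 2).const_mul 2
  refine (setLIntegral_mono' measurableSet_Ioc fun x hx =>
    enorm_weight_smul_pdo_sq_le_causalResolvent hq.toIsBoundedSymbol hq'.toIsBoundedSymbol hd hw
      hg hx).trans ?_
  rw [lintegral_const_mul' _ _ (by finiteness), lintegral_add_left hmeas,
    lintegral_const_mul' _ _ (by finiteness)]
  have hslab := hq.setLIntegral_Ioc_enorm_weight_smul_pdo_sq_le hw hv hv₂ hvm n
  have hslab' := hq'.setLIntegral_Ioc_enorm_weight_smul_pdo_sq_le hw hv hv₂ hvm n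
  refine (mul_le_mul_right (add_le_add (mul_le_mul_right hslab 2) hslab') 2).trans_eq ?_
  ring

theorem IsSymbol.lintegral_enorm_weight_smul_pdo_sq_le (hq : IsSymbol w M q)
    (hq' : IsSymbol w M (derivSnd q)) (hd : ∀ x, Differentiable ℝ (q x)) (hw : IsWeight w)
    (hg : Integrable g) (hg₂ : MemLp g 2) (hgm : Measurable g) :
    ∫⁻ x, ‖w x • pdo q g x‖ₑ ^ 2 ≤
      18 * latticeSum * ENNReal.ofReal (8 * Real.pi * M ^ 2) * ∫⁻ k, ‖g k‖ₑ ^ 2 :=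
  calc ∫⁻ x, ‖w x • pdo q g x‖ₑ ^ 2
      = ∑' n : ℤ, ∫⁻ x in Ioc (n : ℝ) (n + 1), ‖w x • pdo q g x‖ₑ ^ 2 :=
        lintegral_eq_tsum_setLIntegral_Ioc _
    _ ≤ ∑' n : ℤ, 6 * ENNReal.ofReal (8 * Real.pi * M ^ 2) *
          ∫⁻ k, ‖causalResolvent n g k‖ₑ ^ 2 := ENNReal.tsum_le_tsum
        (hq.setLIntegral_enorm_weight_smul_pdo_sq_le_causalResolvent hq' hd hw hg hgm)
    _ ≤ 6 * ENNReal.ofReal (8 * Real.pi * M ^ 2) * (3 * latticeSum * ∫⁻ k, ‖g k‖ₑ ^ 2) := by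
        rw [ENNReal.tsum_mul_left]
        gcongr
        exact tsum_lintegral_enorm_causalResolvent_sq_le hg hg₂ hgm
    _ = _ := by ring

end CalderonVaillancourt

section Evolve

/-- The datum `𝟙_{k > 0} e^{ik²t} f(k)` obtained by letting the half-line part of `f` evolve up to
time `t`; the flow of the theorem is `pdo Q (evolve t h)`. -/
noncomputable def evolve (t : ℝ) (f : ℝ → ℂ) : ℝ → ℂ :=
  (Ioi 0).indicator fun k => Complex.exp (Complex.I * (k : ℂ) ^ 2 * (t : ℂ)) * f k

variable {t x : ℝ} {f F : ℝ → ℂ}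

theorem norm_exp_I_mul_sq_mul (k t : ℝ) :
    ‖Complex.exp (Complex.I * (k : ℂ) ^ 2 * (t : ℂ))‖ = 1 := by
  have h := norm_exp_I_mul_mul (k ^ 2) t
  rwa [Complex.ofReal_pow] at h

theorem norm_evolve_le (t : ℝ) (f : ℝ → ℂ) (k : ℝ) : ‖evolve t f k‖ ≤ ‖f k‖ :=
  (norm_indicator_le_norm_self _ _).trans_eq (by rw [norm_mul, norm_exp_I_mul_sq_mul, one_mul])

theorem mul_evolve (t : ℝ) (a f : ℝ → ℂ) (k : ℝ) :
    a k * evolve t f k = evolve t (fun k => a k * f k) k := by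
  by_cases hk : 0 < k
  · simp only [evolve, indicator_of_mem (mem_Ioi.mpr hk), mul_left_comm]
  · simp only [evolve, indicator_of_notMem (notMem_Ioi.mpr (not_lt.mp hk)), mul_zero]

theorem evolve_add (t : ℝ) (f g : ℝ → ℂ) :
    evolve t (fun k => f k + g k) = fun k => evolve t f k + evolve t g k := by
  simp only [evolve, mul_add]
  exact indicator_add (Ioi 0) _ _

theorem measurable_evolve (hf : Measurable f) (t : ℝ) : Measurable (evolve t f) :=
  Measurable.indicator (by fun_prop) measurableSet_Ioi

theorem aestronglyMeasurable_evolve (hf : AEStronglyMeasurable f) (t : ℝ) :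
    AEStronglyMeasurable (evolve t f) :=
  AEStronglyMeasurable.indicator (by fun_prop) measurableSet_Ioi

theorem integrable_evolve (hf : Integrable f) (t : ℝ) : Integrable (evolve t f) :=
  hf.mono (aestronglyMeasurable_evolve hf.1 t) (Eventually.of_forall (norm_evolve_le t f))

theorem memLp_evolve (hf : MemLp f 2) (t : ℝ) : MemLp (evolve t f) 2 :=
  hf.mono (aestronglyMeasurable_evolve hf.1 t) (Eventually.of_forall (norm_evolve_le t f))

theorem lintegral_enorm_evolve_sq_le (t : ℝ) (f : ℝ → ℂ) :
    ∫⁻ k, ‖evolve t f k‖ₑ ^ 2 ≤ ∫⁻ k, ‖f k‖ₑ ^ 2 := by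
  gcongr with k
  exact enorm_le_iff_norm_le.mpr (norm_evolve_le t f k)

theorem fourierExp_evolve_add {g : ℝ → ℂ} (hf : Integrable f) (hg : Integrable g) (t x : ℝ) :
    fourierExp (evolve t fun k => f k + g k) x =
      fourierExp (evolve t f) x + fourierExp (evolve t g) x := by
  rw [evolve_add, fourierExp_add (integrable_evolve hf t) (integrable_evolve hg t)]

theorem fourierExp_evolve_const_mul (c : ℂ) (t : ℝ) (f : ℝ → ℂ) (x : ℝ) :
    fourierExp (evolve t fun k => c * f k) x = c * fourierExp (evolve t f) x := by
  rw [← fourierExp_const_mul]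
  congr 1 with k
  exact (mul_evolve t (fun _ => c) f k).symm

theorem norm_fourierExp_evolve_le (hf : Integrable f) (t x : ℝ) :
    ‖fourierExp (evolve t f) x‖ ≤ ∫ k, ‖f k‖ :=
  norm_integral_le_of_norm_le hf.norm (Eventually.of_forall fun k => by
    rw [norm_mul, norm_exp_I_mul_mul, one_mul]
    exact norm_evolve_le t f k)

theorem pdo_evolve (q : ℝ → ℝ → ℂ) (t : ℝ) (f : ℝ → ℂ) (x : ℝ) :
    pdo q (evolve t f) x = fourierExp (evolve t fun k => q x k * f k) x := by
  simp only [pdo, mul_evolve]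

theorem fourierExp_evolve_eq_setIntegral (t : ℝ) (f : ℝ → ℂ) (x : ℝ) :
    fourierExp (evolve t f) x = ∫ k : ℝ in Ioi (0 : ℝ), Complex.exp (Complex.I * k * x) *
      Complex.exp (Complex.I * (k : ℂ) ^ 2 * t) * f k := by
  rw [← integral_indicator measurableSet_Ioi, fourierExp]
  congr 1 with k
  by_cases hk : 0 < k <;> simp [evolve, hk, mul_assoc]

theorem hasDerivAt_exp_mul_exp_sq (t x k : ℝ) :
    HasDerivAt (fun k : ℝ => Complex.exp (Complex.I * k * x) *
        Complex.exp (Complex.I * (k : ℂ) ^ 2 * t))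
      (Complex.exp (Complex.I * k * x) * Complex.exp (Complex.I * (k : ℂ) ^ 2 * t) *
        (Complex.I * (x + 2 * t * k))) k := by
  have hsq : HasDerivAt (fun k : ℝ => Complex.exp (Complex.I * (k : ℂ) ^ 2 * t))
      (Complex.exp (Complex.I * (k : ℂ) ^ 2 * t) * (Complex.I * (2 * k) * t)) k := by
    simpa using (((hasDerivAt_pow 2 (k : ℂ)).const_mul Complex.I).mul_const
      (t : ℂ)).cexp.comp_ofReal
  exact ((hasDerivAt_exp_I_mul_mul x k).mul hsq).congr_deriv (by ring)

-- The integrand is the total derivative of `e^{ikx + ik²t} F(k)`.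
theorem fourierExp_evolve_add_deriv (hF : Differentiable ℝ F) (hint : Integrable F)
    (hint' : Integrable (deriv F))
    (hphase : Integrable fun k : ℝ => Complex.I * (x + 2 * t * k) * F k) :
    fourierExp (evolve t fun k => Complex.I * (x + 2 * t * k) * F k + deriv F k) x = -F 0 := by
  have hlim : Tendsto F atTop (𝓝 0) := tendsto_zero_of_hasDerivAt_of_integrableOn_Ioi (a := 0)
    (fun k _ => (hF k).hasDerivAt) hint'.integrableOn hint.integrableOn
  have hderiv (k : ℝ) : HasDerivAt (fun k : ℝ => Complex.exp (Complex.I * k * x) *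
      Complex.exp (Complex.I * (k : ℂ) ^ 2 * t) * F k)
      (Complex.exp (Complex.I * k * x) * Complex.exp (Complex.I * (k : ℂ) ^ 2 * t) *
        (Complex.I * (x + 2 * t * k) * F k + deriv F k)) k :=
    ((hasDerivAt_exp_mul_exp_sq t x k).mul (hF k).hasDerivAt).congr_deriv (by ring)
  have hint₀ : Integrable fun k : ℝ => Complex.exp (Complex.I * k * x) *
      Complex.exp (Complex.I * (k : ℂ) ^ 2 * t) *
        (Complex.I * (x + 2 * t * k) * F k + deriv F k) :=
    (hphase.add hint').bdd_mul (c := 1) (by fun_prop) (Eventually.of_forall fun k => by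
      rw [norm_mul, norm_exp_I_mul_mul, norm_exp_I_mul_sq_mul, one_mul])
  have hlim' : Tendsto (fun k : ℝ => Complex.exp (Complex.I * k * x) *
      Complex.exp (Complex.I * (k : ℂ) ^ 2 * t) * F k) atTop (𝓝 0) :=
    squeeze_zero_norm (fun k => by
      rw [norm_mul, norm_mul, norm_exp_I_mul_mul, norm_exp_I_mul_sq_mul, one_mul, one_mul])
      (tendsto_zero_iff_norm_tendsto_zero.mp hlim)
  rw [fourierExp_evolve_eq_setIntegral, integral_Ioi_of_hasDerivAt_of_tendsto'
    (fun k _ => hderiv k) hint₀.integrableOn hlim']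
  simp

end Evolve

section Oscillatory

theorem integral_mul_le_sqrt_mul_sqrt {f g : ℝ → ℝ} (hf : MemLp f 2) (hg : MemLp g 2)
    (hf0 : 0 ≤ f) (hg0 : 0 ≤ g) :
    ∫ k, f k * g k ≤ √(∫ k, f k ^ 2) * √(∫ k, g k ^ 2) := by
  simpa [Real.sqrt_eq_rpow] using integral_mul_le_Lp_mul_Lq_of_nonneg
    Real.HolderConjugate.two_two (Eventually.of_forall hf0) (Eventually.of_forall hg0)
    (by simpa using hf) (by simpa using hg)

/-- The regularization `s / (1 + ts²)` of `1 / (ts)`, by which one integrates by parts against the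
phase `e^{its²}`. -/
noncomputable def regInv (t s : ℝ) : ℝ := s * (1 + t * s ^ 2)⁻¹

variable {t : ℝ}

theorem one_add_mul_sq_pos (ht : 0 < t) (s : ℝ) : 0 < 1 + t * s ^ 2 := by positivity

theorem hasDerivAt_regInv (ht : 0 < t) (s : ℝ) :
    HasDerivAt (regInv t) ((1 - t * s ^ 2) * (1 + t * s ^ 2)⁻¹ ^ 2) s := by
  have hne := (one_add_mul_sq_pos ht s).ne'
  have hden : HasDerivAt (fun s => 1 + t * s ^ 2) (t * (2 * s)) s := by
    simpa using ((hasDerivAt_pow 2 s).const_mul t).const_add 1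
  refine ((hasDerivAt_id s).mul (hden.inv hne)).congr_deriv ?_
  simp only [id_eq, Pi.inv_apply]
  field_simp
  ring

theorem abs_deriv_regInv_le (ht : 0 < t) (s : ℝ) : |deriv (regInv t) s| ≤ (1 + t * s ^ 2)⁻¹ := by
  have hpos := one_add_mul_sq_pos ht s
  rw [(hasDerivAt_regInv ht s).deriv, sq (_)⁻¹, ← mul_assoc, abs_mul, abs_of_pos (inv_pos.mpr hpos)]
  refine mul_le_of_le_one_left (inv_pos.mpr hpos).le ?_
  rw [abs_mul, abs_of_pos (inv_pos.mpr hpos), ← div_eq_mul_inv, div_le_one hpos, abs_le]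
  have : 0 ≤ t * s ^ 2 := by positivity
  constructor <;> linarith

theorem regInv_sq_le (ht : 0 < t) (s : ℝ) : regInv t s ^ 2 ≤ t⁻¹ * (1 + t * s ^ 2)⁻¹ := by
  have hpos := one_add_mul_sq_pos ht s
  rw [regInv, mul_pow, sq (_)⁻¹, ← mul_assoc]
  refine mul_le_mul_of_nonneg_right ?_ (inv_pos.mpr hpos).le
  rw [← div_eq_mul_inv, div_le_iff₀ hpos, mul_add, inv_mul_cancel_left₀ ht.ne', mul_one]
  exact le_add_of_nonneg_left (inv_pos.mpr ht).le

theorem abs_regInv_le (ht : 0 < t) (s : ℝ) : |regInv t s| ≤ (√t)⁻¹ := by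
  rw [← Real.sqrt_inv]
  refine Real.abs_le_sqrt ((regInv_sq_le ht s).trans (mul_le_of_le_one_right (by positivity) ?_))
  exact inv_le_one_of_one_le₀ (le_add_of_nonneg_right (by positivity))

theorem integrable_inv_one_add_mul_sq (ht : 0 < t) (c : ℝ) :
    Integrable fun k : ℝ => (1 + t * (k + c) ^ 2)⁻¹ := by
  have h := (integrable_inv_one_add_sq.comp_mul_left' (Real.sqrt_pos.mpr ht).ne').comp_add_right c
  simpa only [mul_pow, Real.sq_sqrt ht.le] using h

theorem integral_inv_one_add_mul_sq (ht : 0 < t) (c : ℝ) :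
    ∫ k : ℝ, (1 + t * (k + c) ^ 2)⁻¹ = (√t)⁻¹ * Real.pi := by
  have h := Measure.integral_comp_mul_left (fun k : ℝ => (1 + k ^ 2)⁻¹) √t
  rw [integral_univ_inv_one_add_sq, abs_of_nonneg (inv_nonneg.mpr (Real.sqrt_nonneg t)),
    smul_eq_mul] at h
  rw [← h, integral_add_right_eq_self (fun k : ℝ => (1 + t * k ^ 2)⁻¹) c]
  simp only [mul_pow, Real.sq_sqrt ht.le]

theorem continuous_regInv (ht : 0 < t) : Continuous (regInv t) :=
  continuous_iff_continuousAt.mpr fun s => (hasDerivAt_regInv ht s).continuousAt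

theorem memLp_regInv (ht : 0 < t) (c : ℝ) : MemLp (fun k => regInv t (k + c)) 2 := by
  have hmeas : AEStronglyMeasurable fun k => regInv t (k + c) :=
    ((continuous_regInv ht).comp (continuous_add_const c)).aestronglyMeasurable
  refine (memLp_two_iff_integrable_sq hmeas).mpr (((integrable_inv_one_add_mul_sq ht c).const_mul
    t⁻¹).mono' (hmeas.pow 2) (Eventually.of_forall fun k => ?_))
  rw [Real.norm_of_nonneg (sq_nonneg _)]
  exact regInv_sq_le ht _

theorem integral_regInv_sq_le (ht : 1 ≤ t) (c : ℝ) :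
    ∫ k, regInv t (k + c) ^ 2 ≤ (2 * (√t)⁻¹) ^ 2 := by
  have ht0 : 0 < t := one_pos.trans_le ht
  calc ∫ k, regInv t (k + c) ^ 2 ≤ ∫ k, t⁻¹ * (1 + t * (k + c) ^ 2)⁻¹ :=
        integral_mono (memLp_regInv ht0 c).integrable_sq
          ((integrable_inv_one_add_mul_sq ht0 c).const_mul _) fun k => regInv_sq_le ht0 _
    _ = t⁻¹ * ((√t)⁻¹ * Real.pi) := by
        rw [integral_const_mul, integral_inv_one_add_mul_sq ht0]
    _ ≤ t⁻¹ * (1 * 4) := by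
        gcongr
        · exact inv_le_one_of_one_le₀ (Real.one_le_sqrt.mpr ht)
        · exact Real.pi_le_four
    _ = (2 * (√t)⁻¹) ^ 2 := by
        rw [mul_pow, inv_pow, Real.sq_sqrt ht0.le]
        ring

theorem integral_abs_regInv_mul_norm_le (ht : 1 ≤ t) {f : ℝ → ℂ} (hf : MemLp f 2) (c : ℝ) :
    ∫ k, |regInv t (k + c)| * ‖f k‖ ≤ 2 * (√t)⁻¹ * √(∫ k, ‖f k‖ ^ 2) := by
  refine (integral_mul_le_sqrt_mul_sqrt (memLp_regInv (one_pos.trans_le ht) c).norm hf.norm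
    (fun _ => abs_nonneg _) (fun _ => norm_nonneg _)).trans ?_
  gcongr
  refine Real.sqrt_le_iff.mpr ⟨by positivity, ?_⟩
  simp_rw [Real.norm_eq_abs, sq_abs]
  exact integral_regInv_sq_le ht c

/-- The remainder of the integration by parts in `fourierExp_evolve_eq_regInv`. -/
noncomputable def regRemainder (t c : ℝ) (f : ℝ → ℂ) (k : ℝ) : ℂ :=
  ((1 + t * (k + c) ^ 2 : ℝ) : ℂ)⁻¹ * f k +
    Complex.I / 2 * ((deriv (regInv t) (k + c) : ℝ) * f k + regInv t (k + c) * deriv f k)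

variable {f : ℝ → ℂ}

theorem norm_regRemainder_le (ht : 0 < t) (c : ℝ) (f : ℝ → ℂ) (k : ℝ) :
    ‖regRemainder t c f k‖ ≤ 3 / 2 * ((1 + t * (k + c) ^ 2)⁻¹ * ‖f k‖) +
      2⁻¹ * (|regInv t (k + c)| * ‖deriv f k‖) := by
  have hpos := one_add_mul_sq_pos ht (k + c)
  have hmain : ‖((1 + t * (k + c) ^ 2 : ℝ) : ℂ)⁻¹ * f k‖ = (1 + t * (k + c) ^ 2)⁻¹ * ‖f k‖ := by
    rw [norm_mul, norm_inv, Complex.norm_of_nonneg hpos.le]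
  have hderiv : ‖((deriv (regInv t) (k + c) : ℝ) : ℂ) * f k‖ ≤ (1 + t * (k + c) ^ 2)⁻¹ * ‖f k‖ := by
    rw [norm_mul, Complex.norm_real]
    gcongr
    exact abs_deriv_regInv_le ht _
  have hlast : ‖(regInv t (k + c) : ℂ) * deriv f k‖ = |regInv t (k + c)| * ‖deriv f k‖ := by
    rw [norm_mul, Complex.norm_real, Real.norm_eq_abs]
  have hI : ‖Complex.I / 2‖ = 2⁻¹ := by simp
  refine (norm_add_le _ _).trans ?_
  rw [norm_mul (Complex.I / 2), hI, hmain]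
  linarith [norm_add_le (((deriv (regInv t) (k + c) : ℝ) : ℂ) * f k) (regInv t (k + c) * deriv f k)]

theorem integrable_inv_one_add_mul_sq_mul (ht : 0 < t) (hf : Integrable f) (c : ℝ) :
    Integrable fun k => ((1 + t * (k + c) ^ 2 : ℝ) : ℂ)⁻¹ * f k := by
  refine hf.bdd_mul (c := 1) (by fun_prop) (Eventually.of_forall fun k => ?_)
  rw [norm_inv, Complex.norm_of_nonneg (one_add_mul_sq_pos ht _).le]
  exact inv_le_one_of_one_le₀ (le_add_of_nonneg_right (by positivity))

theorem integrable_deriv_regInv_mul (ht : 0 < t) (hf : Integrable f) (hf' : MemLp (deriv f) 2)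
    (c : ℝ) : Integrable fun k =>
      ((deriv (regInv t) (k + c) : ℝ) : ℂ) * f k + regInv t (k + c) * deriv f k := by
  refine Integrable.add (hf.bdd_mul (c := 1) ?_ (Eventually.of_forall fun k => ?_))
    (MemLp.integrable_mul (memLp_regInv ht c).ofReal hf')
  · exact (Complex.measurable_ofReal.comp
      ((measurable_deriv _).comp (measurable_add_const c))).aestronglyMeasurable
  · rw [Complex.norm_real]
    exact (abs_deriv_regInv_le ht _).trans
      (inv_le_one_of_one_le₀ (le_add_of_nonneg_right (by positivity)))

theorem integrable_regRemainder (ht : 0 < t) (hf : Integrable f) (hf' : MemLp (deriv f) 2)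
    (c : ℝ) : Integrable (regRemainder t c f) :=
  (integrable_inv_one_add_mul_sq_mul ht hf c).add
    ((integrable_deriv_regInv_mul ht hf hf' c).const_mul _)

theorem I_mul_phase_mul_regInv (ht : 0 < t) (x k : ℝ) (z : ℂ) :
    Complex.I * (x + 2 * t * k) * (-(Complex.I / 2) * (regInv t (k + x / (2 * t)) * z)) =
      z - ((1 + t * (k + x / (2 * t)) ^ 2 : ℝ) : ℂ)⁻¹ * z := by
  set c := x / (2 * t) with hc
  have hphase : (x + 2 * t * k : ℂ) = (2 * t * (k + c) : ℝ) := by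
    have : (t : ℂ) ≠ 0 := Complex.ofReal_ne_zero.mpr ht.ne'
    rw [hc]
    push_cast
    field_simp
    ring
  have hne : ((1 + t * (k + c) ^ 2 : ℝ) : ℂ) ≠ 0 :=
    Complex.ofReal_ne_zero.mpr (one_add_mul_sq_pos ht _).ne'
  rw [hphase, regInv]
  push_cast at hne ⊢
  field_simp
  linear_combination (-(t : ℂ) * (k + c) ^ 2 * z) * Complex.I_sq

theorem fourierExp_evolve_eq_regInv (ht : 0 < t) (hd : Differentiable ℝ f) (hf : Integrable f)
    (hf' : MemLp (deriv f) 2) (x : ℝ) :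
    fourierExp (evolve t f) x = Complex.I / 2 * (regInv t (x / (2 * t)) * f 0) +
      fourierExp (evolve t (regRemainder t (x / (2 * t)) f)) x := by
  set c := x / (2 * t)
  set F : ℝ → ℂ := fun k => -(Complex.I / 2) * (regInv t (k + c) * f k) with hF
  have hderiv (k : ℝ) : HasDerivAt F (-(Complex.I / 2) *
      ((deriv (regInv t) (k + c) : ℝ) * f k + regInv t (k + c) * deriv f k)) k :=
    ((((hasDerivAt_regInv ht _).differentiableAt.hasDerivAt.comp_add_const k c).ofReal_comp).mul
      (hd k).hasDerivAt).const_mul _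
  have hint : Integrable F :=
    (hf.bdd_mul (c := (√t)⁻¹) (Complex.continuous_ofReal.comp ((continuous_regInv ht).comp
      (continuous_add_const c))).aestronglyMeasurable (Eventually.of_forall fun k => by
        rw [Function.comp, Complex.norm_real]
        exact abs_regInv_le ht _)).const_mul _
  have hint' : Integrable (deriv F) := by
    rw [funext fun k => (hderiv k).deriv]
    exact (integrable_deriv_regInv_mul ht hf hf' c).const_mul _
  have hphase (k : ℝ) : Complex.I * (x + 2 * t * k) * F k =
      f k - ((1 + t * (k + c) ^ 2 : ℝ) : ℂ)⁻¹ * f k :=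
    I_mul_phase_mul_regInv ht x k (f k)
  have hint₀ : Integrable fun k : ℝ => Complex.I * (x + 2 * t * k) * F k := by
    simp_rw [hphase]
    exact hf.sub (integrable_inv_one_add_mul_sq_mul ht hf c)
  have hint₁ : Integrable fun k : ℝ => Complex.I * (x + 2 * t * k) * F k + deriv F k :=
    hint₀.add hint'
  have hsplit : f = fun k : ℝ =>
      (Complex.I * (x + 2 * t * k) * F k + deriv F k) + regRemainder t c f k := by
    ext k
    rw [(hderiv k).deriv, hphase, regRemainder]
    ring
  have hboundary := fourierExp_evolve_add_deriv (fun k => (hderiv k).differentiableAt)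
    hint hint' hint₀
  conv_lhs => rw [hsplit]
  rw [fourierExp_evolve_add hint₁ (integrable_regRemainder ht hf hf' c),
    hboundary]
  simp [hF]

theorem norm_fourierExp_evolve_le_inv_sqrt (ht : 1 ≤ t) {B D : ℝ} (hd : Differentiable ℝ f)
    (hf : Integrable f) (hB : ∀ k, ‖f k‖ ≤ B) (hf' : MemLp (deriv f) 2)
    (hD : √(∫ k, ‖deriv f k‖ ^ 2) ≤ D) (x : ℝ) :
    ‖fourierExp (evolve t f) x‖ ≤ (√t)⁻¹ * (7 * B + D) := by
  have ht0 : 0 < t := one_pos.trans_le ht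
  set c := x / (2 * t) with hc
  have hB0 : 0 ≤ B := (norm_nonneg _).trans (hB 0)
  have hint : Integrable fun k => (1 + t * (k + c) ^ 2)⁻¹ * ‖f k‖ := by
    simpa only [norm_mul, norm_inv, Complex.norm_of_nonneg (one_add_mul_sq_pos ht0 _).le] using
      (integrable_inv_one_add_mul_sq_mul ht0 hf c).norm
  have hint' : Integrable fun k => |regInv t (k + c)| * ‖deriv f k‖ :=
    MemLp.integrable_mul (memLp_regInv ht0 c).norm hf'.norm
  have hmain : ∫ k, (1 + t * (k + c) ^ 2)⁻¹ * ‖f k‖ ≤ (√t)⁻¹ * 4 * B := by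
    refine (integral_mono hint ((integrable_inv_one_add_mul_sq ht0 c).mul_const B) fun k =>
      mul_le_mul_of_nonneg_left (hB k) (inv_pos.mpr (one_add_mul_sq_pos ht0 _)).le).trans ?_
    rw [integral_mul_const, integral_inv_one_add_mul_sq ht0]
    gcongr
    exact Real.pi_le_four
  have hboundary : ‖Complex.I / 2 * (regInv t c * f 0)‖ ≤ 2⁻¹ * ((√t)⁻¹ * B) := by
    rw [norm_mul, norm_mul, Complex.norm_real, norm_div, Complex.norm_I, Complex.norm_two, one_div]
    gcongr
    · exact abs_regInv_le ht0 c
    · exact hB 0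
  have hremainder : ‖fourierExp (evolve t (regRemainder t c f)) x‖ ≤
      3 / 2 * ((√t)⁻¹ * 4 * B) + 2⁻¹ * (2 * (√t)⁻¹ * D) := by
    refine (norm_fourierExp_evolve_le (integrable_regRemainder ht0 hf hf' c) t x).trans ?_
    refine (integral_mono (integrable_regRemainder ht0 hf hf' c).norm
      ((hint.const_mul _).add (hint'.const_mul _)) (norm_regRemainder_le ht0 c f)).trans ?_
    rw [integral_add' (hint.const_mul _) (hint'.const_mul _), integral_const_mul,
      integral_const_mul]
    gcongr
    exact (integral_abs_regInv_mul_norm_le ht hf' c).trans (by gcongr)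
  have hnonneg : 0 ≤ (√t)⁻¹ * B := by positivity
  rw [fourierExp_evolve_eq_regInv ht0 hd hf hf', ← hc]
  linarith [norm_add_le (Complex.I / 2 * (regInv t c * f 0))
    (fourierExp (evolve t (regRemainder t c f)) x)]

end Oscillatory

section Sobolev

theorem norm_sq_le_integral_add_integral {f : ℝ → ℂ} (hd : Differentiable ℝ f) (hf : MemLp f 2)
    (hf' : MemLp (deriv f) 2) (k : ℝ) :
    ‖f k‖ ^ 2 ≤ (∫ y, ‖f y‖ ^ 2) + ∫ y, ‖deriv f y‖ ^ 2 := by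
  have hderiv (y : ℝ) : HasDerivAt (fun y => ‖f y‖ ^ 2) (2 * inner ℝ (f y) (deriv f y)) y :=
    (hd y).hasDerivAt.norm_sq
  have hsum : Integrable fun y => ‖f y‖ ^ 2 + ‖deriv f y‖ ^ 2 :=
    (hf.integrable_norm_pow two_ne_zero).add (hf'.integrable_norm_pow two_ne_zero)
  have hbound (y : ℝ) : ‖2 * inner ℝ (f y) (deriv f y)‖ ≤ ‖f y‖ ^ 2 + ‖deriv f y‖ ^ 2 := by
    rw [norm_mul, Real.norm_two]
    nlinarith [norm_inner_le_norm (𝕜 := ℝ) (f y) (deriv f y), sq_nonneg (‖f y‖ - ‖deriv f y‖)]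
  have hint : Integrable fun y => 2 * inner ℝ (f y) (deriv f y) :=
    hsum.mono' ((hf.1.inner hf'.1).const_mul 2) (Eventually.of_forall hbound)
  have hlim : Tendsto (fun y => ‖f y‖ ^ 2) atBot (𝓝 0) :=
    tendsto_zero_of_hasDerivAt_of_integrableOn_Iic (a := k) (fun y _ => hderiv y)
      hint.integrableOn (hf.integrable_norm_pow two_ne_zero).integrableOn
  calc ‖f k‖ ^ 2 = ∫ y in Iic k, 2 * inner ℝ (f y) (deriv f y) := by
        rw [integral_Iic_of_hasDerivAt_of_tendsto' (fun y _ => hderiv y) hint.integrableOn hlim,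
          sub_zero]
    _ ≤ ∫ y in Iic k, (‖f y‖ ^ 2 + ‖deriv f y‖ ^ 2) :=
        integral_mono hint.integrableOn hsum.integrableOn
          fun y => (Real.le_norm_self _).trans (hbound y)
    _ ≤ ∫ y, (‖f y‖ ^ 2 + ‖deriv f y‖ ^ 2) :=
        setIntegral_le_integral hsum (Eventually.of_forall fun y => by positivity)
    _ = (∫ y, ‖f y‖ ^ 2) + ∫ y, ‖deriv f y‖ ^ 2 :=
        integral_add (hf.integrable_norm_pow two_ne_zero) (hf'.integrable_norm_pow two_ne_zero)

/-- The `H¹` norm of a function on the line. -/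
noncomputable def sobolevNorm (f : ℝ → ℂ) : ℝ :=
  √((∫ k, ‖f k‖ ^ 2) + ∫ k, ‖deriv f k‖ ^ 2)

theorem sobolevNorm_nonneg (f : ℝ → ℂ) : 0 ≤ sobolevNorm f := Real.sqrt_nonneg _

theorem sobolevNorm_sq (f : ℝ → ℂ) :
    sobolevNorm f ^ 2 = (∫ k, ‖f k‖ ^ 2) + ∫ k, ‖deriv f k‖ ^ 2 :=
  Real.sq_sqrt (add_nonneg (integral_nonneg fun _ => by positivity)
    (integral_nonneg fun _ => by positivity))

theorem norm_le_sobolevNorm {f : ℝ → ℂ} (hd : Differentiable ℝ f) (hf : MemLp f 2)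
    (hf' : MemLp (deriv f) 2) (k : ℝ) : ‖f k‖ ≤ sobolevNorm f :=
  Real.le_sqrt_of_sq_le (norm_sq_le_integral_add_integral hd hf hf' k)

theorem lintegral_enorm_sq_eq_ofReal {f : ℝ → ℂ} (hf : MemLp f 2) :
    ∫⁻ k, ‖f k‖ₑ ^ 2 = ENNReal.ofReal (∫ k, ‖f k‖ ^ 2) := by
  rw [ofReal_integral_eq_lintegral_ofReal (hf.integrable_norm_pow two_ne_zero)
    (Eventually.of_forall fun _ => by positivity)]
  simp_rw [ENNReal.ofReal_pow (norm_nonneg _), ofReal_norm]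

theorem lintegral_enorm_sq_le_sobolevNorm {f : ℝ → ℂ} (hf : MemLp f 2) :
    ∫⁻ k, ‖f k‖ₑ ^ 2 ≤ ENNReal.ofReal (sobolevNorm f ^ 2) := by
  rw [lintegral_enorm_sq_eq_ofReal hf, sobolevNorm_sq]
  exact ENNReal.ofReal_le_ofReal (le_add_of_nonneg_right (integral_nonneg fun _ => by positivity))

theorem lintegral_enorm_deriv_sq_le_sobolevNorm {f : ℝ → ℂ} (hf' : MemLp (deriv f) 2) :
    ∫⁻ k, ‖deriv f k‖ₑ ^ 2 ≤ ENNReal.ofReal (sobolevNorm f ^ 2) := by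
  rw [lintegral_enorm_sq_eq_ofReal hf', sobolevNorm_sq]
  exact ENNReal.ofReal_le_ofReal (le_add_of_nonneg_left (integral_nonneg fun _ => by positivity))

end Sobolev

section Flow

/-- The regularity and decay of the datum under which the half-line flow can be differentiated
under the integral sign and integrated by parts. -/
structure IsDatum (h : ℝ → ℂ) : Prop where
  differentiable : Differentiable ℝ h
  integrable : Integrable h
  integrable_id_mul : Integrable fun k : ℝ => (k : ℂ) * h k
  integrable_deriv : Integrable (deriv h)
  memLp : MemLp h 2
  memLp_deriv : MemLp (deriv h) 2

theorem isDatum_schwartzMap (h : SchwartzMap ℝ ℂ) : IsDatum h where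
  differentiable := h.differentiable
  integrable := h.integrable
  integrable_id_mul := by
    refine (integrable_norm_iff (by fun_prop)).mp ?_
    simpa using h.integrable_pow_mul volume 1
  integrable_deriv := (SchwartzMap.derivCLM ℝ ℂ h).integrable
  memLp := h.memLp 2 volume
  memLp_deriv := (SchwartzMap.derivCLM ℝ ℂ h).memLp 2 volume

variable {w : ℝ → ℝ} {M t : ℝ} {q : ℝ → ℝ → ℂ} {h : ℝ → ℂ}

theorem IsDatum.measurable (hh : IsDatum h) : Measurable h :=
  hh.differentiable.continuous.measurable

theorem IsDatum.integrable_id_mul_evolve (hh : IsDatum h) (t : ℝ) :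
    Integrable fun k : ℝ => (k : ℂ) * evolve t h k := by
  simp_rw [mul_evolve t (fun k : ℝ => (k : ℂ)) h]
  exact integrable_evolve hh.integrable_id_mul t

theorem IsDatum.deriv_mul (hh : IsDatum h) {a : ℝ → ℂ} (hd : Differentiable ℝ a) :
    deriv (fun k => a k * h k) = fun k => deriv a k * h k + a k * deriv h k :=
  funext fun k => deriv_fun_mul (hd k) (hh.differentiable k)

theorem integral_norm_deriv_mul_sq_le {a : ℝ → ℂ} {A : ℝ} (hd : Differentiable ℝ a)
    (ha : ∀ k, ‖a k‖ ≤ A) (ha' : ∀ k, ‖deriv a k‖ ≤ A) (hh : IsDatum h) :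
    ∫ k, ‖deriv (fun k => a k * h k) k‖ ^ 2 ≤ (2 * (A * sobolevNorm h)) ^ 2 := by
  have hsq := hh.memLp.integrable_norm_pow two_ne_zero
  have hsq' := hh.memLp_deriv.integrable_norm_pow two_ne_zero
  have hbound (k : ℝ) : ‖deriv (fun k => a k * h k) k‖ ^ 2 ≤
      2 * A ^ 2 * (‖h k‖ ^ 2 + ‖deriv h k‖ ^ 2) := by
    rw [hh.deriv_mul hd]
    calc ‖deriv a k * h k + a k * deriv h k‖ ^ 2 ≤ (A * ‖h k‖ + A * ‖deriv h k‖) ^ 2 := by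
          refine pow_le_pow_left₀ (norm_nonneg _) ((norm_add_le _ _).trans ?_) 2
          rw [norm_mul, norm_mul]
          gcongr
          exacts [ha' k, ha k]
      _ ≤ 2 * ((A * ‖h k‖) ^ 2 + (A * ‖deriv h k‖) ^ 2) := add_sq_le
      _ = 2 * A ^ 2 * (‖h k‖ ^ 2 + ‖deriv h k‖ ^ 2) := by ring
  calc ∫ k, ‖deriv (fun k => a k * h k) k‖ ^ 2
      ≤ ∫ k, 2 * A ^ 2 * (‖h k‖ ^ 2 + ‖deriv h k‖ ^ 2) :=
        integral_mono_of_nonneg (Eventually.of_forall fun _ => by positivity)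
          ((hsq.add hsq').const_mul _) (Eventually.of_forall hbound)
    _ = 2 * (A * sobolevNorm h) ^ 2 := by
        rw [integral_const_mul, integral_add hsq hsq', mul_pow, sobolevNorm_sq, mul_assoc]
    _ ≤ (2 * (A * sobolevNorm h)) ^ 2 := by nlinarith [sq_nonneg (A * sobolevNorm h)]

theorem memLp_deriv_mul {a : ℝ → ℂ} {A : ℝ} (hd : Differentiable ℝ a)
    (ha : ∀ k, ‖a k‖ ≤ A) (ha' : ∀ k, ‖deriv a k‖ ≤ A) (hh : IsDatum h) :
    MemLp (deriv fun k => a k * h k) 2 := by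
  rw [hh.deriv_mul hd]
  exact (hh.memLp.of_le_mul (((measurable_deriv a).aestronglyMeasurable).mul hh.memLp.1)
    (Eventually.of_forall fun k => (norm_mul_le _ _).trans (by gcongr; exact ha' k))).add
    (hh.memLp_deriv.of_le_mul (hd.continuous.aestronglyMeasurable.mul hh.memLp_deriv.1)
    (Eventually.of_forall fun k => (norm_mul_le _ _).trans (by gcongr; exact ha k)))

theorem norm_fourierExp_evolve_mul_le (ht : 1 ≤ t) {a : ℝ → ℂ} {A : ℝ} (hd : Differentiable ℝ a)
    (ha : ∀ k, ‖a k‖ ≤ A) (ha' : ∀ k, ‖deriv a k‖ ≤ A) (hh : IsDatum h) (x : ℝ) :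
    ‖fourierExp (evolve t fun k => a k * h k) x‖ ≤ (√t)⁻¹ * (9 * (A * sobolevNorm h)) := by
  have hA : 0 ≤ A := (norm_nonneg _).trans (ha 0)
  have hN := sobolevNorm_nonneg h
  have hB (k : ℝ) : ‖a k * h k‖ ≤ A * sobolevNorm h := by
    rw [norm_mul]
    gcongr
    exacts [ha k, norm_le_sobolevNorm hh.differentiable hh.memLp hh.memLp_deriv k]
  refine (norm_fourierExp_evolve_le_inv_sqrt ht (hd.mul hh.differentiable)
    (hh.integrable.bdd_mul hd.continuous.aestronglyMeasurable (Eventually.of_forall ha)) hB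
    (memLp_deriv_mul hd ha ha' hh) (Real.sqrt_le_iff.mpr ⟨by positivity,
      integral_norm_deriv_mul_sq_le hd ha ha' hh⟩) x).trans_eq (by ring)

namespace IsSymbol

theorem eventually_norm_sub_le (hq : IsSymbol w M q) (hw : IsWeight w) (x : ℝ) :
    ∀ᶠ y in 𝓝 x, ∀ k, ‖q y k - q x k‖ ≤ M / (w x / 2) * ‖y - x‖ := by
  obtain ⟨ε, hε, hball⟩ := Metric.eventually_nhds_iff_ball.mp (hw.eventually_half_le x)
  filter_upwards [Metric.ball_mem_nhds x hε] with y hy k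
  refine (convex_ball x ε).norm_image_sub_le_of_norm_deriv_le (f := fun z => q z k)
    (fun z _ => hq.differentiable k z) (fun z hz => ?_) (Metric.mem_ball_self hε) hy
  exact (hq.bounded_derivFst.norm_le hw z k).trans
    (div_le_div_of_nonneg_left (hq.nonneg hw) (half_pos (hw.pos x)) (hball z hz))

-- The mixed derivative of the symbol need not be the derivative in `k` of `∂_x q`, so the bound is
-- applied to the difference quotients of `q` in `x` instead of to `∂_x q`.
theorem weight_mul_norm_pdo_derivFst_evolve_le (hq : IsSymbol w M q)
    (hq' : IsSymbol w M (derivSnd q)) (hd : ∀ x, Differentiable ℝ (q x)) (hw : IsWeight w)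
    (hh : IsDatum h) (ht : 1 ≤ t) (x : ℝ) :
    w x * ‖pdo (derivFst q) (evolve t h) x‖ ≤ (√t)⁻¹ * (18 * M * sobolevNorm h) := by
  have hM := hq.nonneg hw
  have hN := sobolevNorm_nonneg h
  have hwx := hw.pos x
  have hint := integrable_evolve hh.integrable t
  suffices hnorm : ‖pdo (derivFst q) (evolve t h) x‖ ≤
      (√t)⁻¹ * (9 * (M / (w x / 2) * sobolevNorm h)) by
    refine (mul_le_mul_of_nonneg_left hnorm hwx.le).trans_eq ?_
    field_simp
    ring
  refine (hq.hasDerivAt_fourierExp_mul hw hint x x).le_of_lip' (by positivity) ?_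
  filter_upwards [hq.eventually_norm_sub_le hw x, hq'.eventually_norm_sub_le hw x] with y hy hy'
  have hderiv (k : ℝ) : deriv (q y - q x) k = derivSnd q y k - derivSnd q x k :=
    deriv_sub (hd y k) (hd x k)
  rw [← fourierExp_sub (hq.integrable_mul hw hint y) (hq.integrable_mul hw hint x)]
  simp_rw [← sub_mul, mul_evolve t (fun k => q y k - q x k) h]
  exact (norm_fourierExp_evolve_mul_le ht ((hd y).sub (hd x)) hy
    (fun k => by rw [hderiv]; exact hy' k) hh x).trans_eq (by ring)

theorem two_mul_I_mul_pdo_id_mul_evolve (hq : IsSymbol w M q)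
    (hq' : IsBoundedSymbol w M (derivSnd q)) (hd : ∀ x, Differentiable ℝ (q x)) (hw : IsWeight w)
    (hh : IsDatum h) (t x : ℝ) :
    2 * t * (Complex.I * pdo q (fun k => (k : ℂ) * evolve t h k) x) =
      -(q x 0 * h 0) - Complex.I * x * pdo q (evolve t h) x -
        pdo (derivSnd q) (evolve t h) x - pdo q (evolve t (deriv h)) x := by
  have hqh := hq.integrable_mul hw hh.integrable x
  have hqkh := hq.integrable_mul hw hh.integrable_id_mul x
  have hq'h := hq'.integrable_mul hw hh.integrable x
  have hqh' := hq.integrable_mul hw hh.integrable_deriv x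
  have hxqh := hqh.const_mul (Complex.I * x)
  have htqkh := hqkh.const_mul (2 * t * Complex.I)
  have hphase (k : ℝ) : Complex.I * (x + 2 * t * k) * (q x k * h k) =
      Complex.I * x * (q x k * h k) + 2 * t * Complex.I * (q x k * ((k : ℂ) * h k)) := by ring
  have hphase_int : Integrable fun k : ℝ => Complex.I * x * (q x k * h k) +
      2 * t * Complex.I * (q x k * ((k : ℂ) * h k)) := hxqh.add htqkh
  have hderiv_int : Integrable fun k => derivSnd q x k * h k + q x k * deriv h k := hq'h.add hqh'
  have hderiv : deriv (fun k => q x k * h k) =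
      fun k => derivSnd q x k * h k + q x k * deriv h k := hh.deriv_mul (hd x)
  have hboundary := fourierExp_evolve_add_deriv (x := x) (t := t)
    ((hd x).fun_mul hh.differentiable) hqh (by rwa [hderiv])
    (by simpa only [hphase] using hphase_int)
  simp only [hphase, hderiv] at hboundary
  rw [fourierExp_evolve_add hphase_int hderiv_int, fourierExp_evolve_add hxqh htqkh,
    fourierExp_evolve_add hq'h hqh', fourierExp_evolve_const_mul, fourierExp_evolve_const_mul]
    at hboundary
  simp_rw [mul_evolve t (fun k : ℝ => (k : ℂ)) h, pdo_evolve]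
  linear_combination hboundary

end IsSymbol

end Flow

section Decay

variable {w : ℝ → ℝ} {M t : ℝ} {q : ℝ → ℝ → ℂ} {h : ℝ → ℂ}

namespace IsSymbol

theorem weight_mul_norm_pdo_id_mul_evolve_le (hq : IsSymbol w M q)
    (hq' : IsBoundedSymbol w M (derivSnd q)) (hd : ∀ x, Differentiable ℝ (q x)) (hw : IsWeight w)
    (hh : IsDatum h) (ht : 1 ≤ t) (x : ℝ) :
    w x * ‖pdo q (fun k => (k : ℂ) * evolve t h k) x‖ ≤ (√t)⁻¹ * (M * sobolevNorm h +
      w x * ‖pdo (derivSnd q) (evolve t h) x‖ + w x * ‖pdo q (evolve t (deriv h)) x‖ +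
        |x| * (w x * ‖pdo q (evolve t h) x‖)) := by
  have hwx := (hw.pos x).le
  have ht0 : 0 < √t := Real.sqrt_pos.mpr (one_pos.trans_le ht)
  have hroot : √t ≤ 2 * t := by
    nlinarith [Real.sq_sqrt (one_pos.trans_le ht).le, Real.one_le_sqrt.mpr ht]
  have hboundary : w x * ‖q x 0 * h 0‖ ≤ M * sobolevNorm h := by
    rw [norm_mul, ← mul_assoc]
    exact mul_le_mul (hq.weight_mul_norm_le x 0)
      (norm_le_sobolevNorm hh.differentiable hh.memLp hh.memLp_deriv 0) (norm_nonneg _)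
      (hq.nonneg hw)
  have hnorm := congrArg norm (hq.two_mul_I_mul_pdo_id_mul_evolve hq' hd hw hh t x)
  rw [norm_mul, norm_mul, norm_mul, Complex.norm_two, Complex.norm_I, one_mul,
    Complex.norm_of_nonneg (one_pos.trans_le ht).le] at hnorm
  have htriangle : ‖-(q x 0 * h 0) - Complex.I * x * pdo q (evolve t h) x -
      pdo (derivSnd q) (evolve t h) x - pdo q (evolve t (deriv h)) x‖ ≤
      ‖q x 0 * h 0‖ + |x| * ‖pdo q (evolve t h) x‖ + ‖pdo (derivSnd q) (evolve t h) x‖ +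
        ‖pdo q (evolve t (deriv h)) x‖ := by
    refine (norm_sub_le _ _).trans (add_le_add_left ((norm_sub_le _ _).trans
      (add_le_add_left ((norm_sub_le _ _).trans_eq ?_) _)) _)
    simp
  rw [le_inv_mul_iff₀ ht0]
  calc √t * (w x * ‖pdo q (fun k => (k : ℂ) * evolve t h k) x‖)
      ≤ 2 * t * (w x * ‖pdo q (fun k => (k : ℂ) * evolve t h k) x‖) := by gcongr
    _ ≤ w x * (‖q x 0 * h 0‖ + |x| * ‖pdo q (evolve t h) x‖ +
          ‖pdo (derivSnd q) (evolve t h) x‖ + ‖pdo q (evolve t (deriv h)) x‖) := by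
        rw [mul_left_comm, hnorm]
        gcongr
    _ ≤ _ := by linarith

theorem weight_mul_norm_deriv_pdo_evolve_le (hq : IsSymbol w M q)
    (hq' : IsSymbol w M (derivSnd q)) (hd : ∀ x, Differentiable ℝ (q x)) (hw : IsWeight w)
    (hh : IsDatum h) (ht : 1 ≤ t) (x : ℝ) :
    w x * ‖deriv (pdo q (evolve t h)) x‖ ≤ (√t)⁻¹ * (19 * (M * sobolevNorm h) +
      w x * ‖pdo (derivSnd q) (evolve t h) x‖ + w x * ‖pdo q (evolve t (deriv h)) x‖ +
        |x| * (w x * ‖pdo q (evolve t h) x‖)) := by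
  rw [(hq.hasDerivAt_pdo hw (integrable_evolve hh.integrable t)
    (hh.integrable_id_mul_evolve t) x).deriv]
  calc w x * ‖Complex.I * pdo q (fun k => (k : ℂ) * evolve t h k) x +
        pdo (derivFst q) (evolve t h) x‖
      ≤ w x * ‖pdo q (fun k => (k : ℂ) * evolve t h k) x‖ +
        w x * ‖pdo (derivFst q) (evolve t h) x‖ := by
        rw [← mul_add]
        refine mul_le_mul_of_nonneg_left ((norm_add_le _ _).trans_eq ?_) (hw.pos x).le
        rw [norm_mul, Complex.norm_I, one_mul]
    _ ≤ _ := by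
        linarith [hq.weight_mul_norm_pdo_id_mul_evolve_le hq'.toIsBoundedSymbol hd hw hh ht x,
          hq.weight_mul_norm_pdo_derivFst_evolve_le hq' hd hw hh ht x]

theorem enorm_deriv_pdo_evolve_le (hq : IsSymbol w M q)
    (hq' : IsSymbol w M (derivSnd q)) (hd : ∀ x, Differentiable ℝ (q x)) (hw : IsWeight w)
    (hh : IsDatum h) (ht : 1 ≤ t) (x : ℝ) :
    ‖(jap x)⁻¹ • w x • deriv (pdo q (evolve t h)) x‖ₑ ≤ ‖(√t)⁻¹‖ₑ *
      (‖(jap x)⁻¹ • (19 * (M * sobolevNorm h))‖ₑ +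
        ‖(jap x)⁻¹ • w x • pdo (derivSnd q) (evolve t h) x‖ₑ +
        (‖(jap x)⁻¹ • w x • pdo q (evolve t (deriv h)) x‖ₑ +
        ‖w x • pdo q (evolve t h) x‖ₑ)) := by
  have hwx := (hw.pos x).le
  have hjap := jap_pos x
  have hMN : 0 ≤ M * sobolevNorm h := mul_nonneg (hq.nonneg hw) (sobolevNorm_nonneg h)
  have hx : (jap x)⁻¹ * |x| ≤ 1 := inv_mul_le_one_of_le₀ (abs_le_jap x) hjap.le
  have hreal : (jap x)⁻¹ * (w x * ‖deriv (pdo q (evolve t h)) x‖) ≤ (√t)⁻¹ *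
      ((jap x)⁻¹ * (19 * (M * sobolevNorm h)) +
        (jap x)⁻¹ * (w x * ‖pdo (derivSnd q) (evolve t h) x‖) +
        ((jap x)⁻¹ * (w x * ‖pdo q (evolve t (deriv h)) x‖) +
        w x * ‖pdo q (evolve t h) x‖)) := by
    refine (mul_le_mul_of_nonneg_left (hq.weight_mul_norm_deriv_pdo_evolve_le hq' hd hw hh ht x)
      (inv_pos.mpr hjap).le).trans ?_
    rw [mul_left_comm]
    refine mul_le_mul_of_nonneg_left ?_ (by positivity)
    have := mul_le_mul_of_nonneg_right hx (mul_nonneg hwx (norm_nonneg (pdo q (evolve t h) x)))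
    linarith
  simp only [← ofReal_norm, norm_smul, norm_inv, Real.norm_of_nonneg hwx,
    Real.norm_of_nonneg hjap.le, Real.norm_of_nonneg (Real.sqrt_nonneg t),
    Real.norm_of_nonneg (mul_nonneg (by norm_num : (0 : ℝ) ≤ 19) hMN)]
  rw [← ENNReal.ofReal_add (by positivity) (by positivity),
    ← ENNReal.ofReal_add (by positivity) (by positivity),
    ← ENNReal.ofReal_add (by positivity) (by positivity),
    ← ENNReal.ofReal_mul (by positivity)]
  exact ENNReal.ofReal_le_ofReal hreal

end IsSymbol

theorem ennreal_add_add_add_sq_le (a b c d : ENNReal) :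
    (a + b + (c + d)) ^ 2 ≤ 4 * (a ^ 2 + b ^ 2 + (c ^ 2 + d ^ 2)) :=
  calc (a + b + (c + d)) ^ 2 ≤ 2 * ((a + b) ^ 2 + (c + d) ^ 2) := ennreal_add_sq_le _ _
    _ ≤ 2 * (2 * (a ^ 2 + b ^ 2) + 2 * (c ^ 2 + d ^ 2)) := by
        gcongr <;> exact ennreal_add_sq_le _ _
    _ = 4 * (a ^ 2 + b ^ 2 + (c ^ 2 + d ^ 2)) := by ring

theorem lintegral_enorm_inv_jap_smul_sq (c : ℝ) :
    ∫⁻ x, ‖(jap x)⁻¹ • c‖ₑ ^ 2 = ENNReal.ofReal (Real.pi * c ^ 2) := by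
  simp_rw [enorm_smul, mul_pow, enorm_inv_jap_sq]
  rw [lintegral_mul_const' _ _ (by finiteness), ← ofReal_integral_eq_lintegral_ofReal
    integrable_inv_one_add_sq (Eventually.of_forall fun _ => by positivity),
    integral_univ_inv_one_add_sq, ENNReal.ofReal_mul Real.pi_pos.le, ← sq_abs,
    ENNReal.ofReal_pow (abs_nonneg c), ← Real.norm_eq_abs, ofReal_norm]

theorem sqrt_integral_norm_sq_le {f : ℝ → ℂ} {c : ℝ} (hc : 0 ≤ c)
    (hf : ∫⁻ x, ‖f x‖ₑ ^ 2 ≤ ENNReal.ofReal (c ^ 2)) : √(∫ x, ‖f x‖ ^ 2) ≤ c := by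
  refine Real.sqrt_le_iff.mpr ⟨hc, (ENNReal.ofReal_le_ofReal_iff (sq_nonneg c)).mp ?_⟩
  calc ENNReal.ofReal (∫ x, ‖f x‖ ^ 2) ≤ ∫⁻ x, ‖‖f x‖ ^ 2‖ₑ := by
        rw [← Real.enorm_of_nonneg (integral_nonneg fun _ => by positivity)]
        exact enorm_integral_le_lintegral_enorm _
    _ = ∫⁻ x, ‖f x‖ₑ ^ 2 := by simp only [enorm_pow, enorm_norm]
    _ ≤ ENNReal.ofReal (c ^ 2) := hf

/-- The square of the constant in the decay estimate, for symbols bounded by `1`. The `4` comes from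
squaring a sum of four terms. -/
noncomputable def decayConst : ENNReal :=
  4 * (ENNReal.ofReal (361 * Real.pi) + 24 * latticeSum * ENNReal.ofReal (8 * Real.pi))

theorem decayConst_ne_top : decayConst ≠ ⊤ := by
  have := latticeSum_ne_top
  unfold decayConst
  finiteness

theorem decayConst_ne_zero : decayConst ≠ 0 := by
  simp [decayConst, Real.pi_pos]

namespace IsSymbol

theorem lintegral_enorm_inv_jap_smul_pdo_evolve_sq_le (hq : IsSymbol w M q) (hw : IsWeight w)
    {f : ℝ → ℂ} (hf : Integrable f) (hf₂ : MemLp f 2) (hfm : Measurable f) {N : ℝ}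
    (hN : ∫⁻ k, ‖f k‖ₑ ^ 2 ≤ ENNReal.ofReal (N ^ 2)) (t : ℝ) :
    ∫⁻ x, ‖(jap x)⁻¹ • w x • pdo q (evolve t f) x‖ₑ ^ 2 ≤
      3 * latticeSum * ENNReal.ofReal (8 * Real.pi) * ENNReal.ofReal ((M * N) ^ 2) := by
  refine (hq.lintegral_enorm_inv_jap_smul_pdo_sq_le hw (integrable_evolve hf t)
    (memLp_evolve hf₂ t) (measurable_evolve hfm t)).trans ?_
  rw [mul_pow, ENNReal.ofReal_mul (q := M ^ 2) (by positivity),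
    ENNReal.ofReal_mul (q := _ ^ 2) (by positivity)]
  simp only [mul_assoc]
  gcongr
  exact (lintegral_enorm_evolve_sq_le t f).trans hN

theorem lintegral_enorm_weight_smul_pdo_evolve_sq_le (hq : IsSymbol w M q)
    (hq' : IsSymbol w M (derivSnd q)) (hd : ∀ x, Differentiable ℝ (q x)) (hw : IsWeight w)
    (hh : IsDatum h) (t : ℝ) :
    ∫⁻ x, ‖w x • pdo q (evolve t h) x‖ₑ ^ 2 ≤
      18 * latticeSum * ENNReal.ofReal (8 * Real.pi) *
        ENNReal.ofReal ((M * sobolevNorm h) ^ 2) := by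
  refine (hq.lintegral_enorm_weight_smul_pdo_sq_le hq' hd hw (integrable_evolve hh.integrable t)
    (memLp_evolve hh.memLp t) (measurable_evolve hh.measurable t)).trans ?_
  rw [mul_pow, ENNReal.ofReal_mul (q := M ^ 2) (by positivity),
    ENNReal.ofReal_mul (q := _ ^ 2) (by positivity)]
  simp only [mul_assoc]
  gcongr
  exact (lintegral_enorm_evolve_sq_le t h).trans (lintegral_enorm_sq_le_sobolevNorm hh.memLp)

theorem lintegral_enorm_deriv_pdo_evolve_sq_le_add (hq : IsSymbol w M q)
    (hq' : IsSymbol w M (derivSnd q)) (hd : ∀ x, Differentiable ℝ (q x)) (hw : IsWeight w)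
    (hh : IsDatum h) (ht : 1 ≤ t) :
    ∫⁻ x, ‖(jap x)⁻¹ • w x • deriv (pdo q (evolve t h)) x‖ₑ ^ 2 ≤
      ‖(√t)⁻¹‖ₑ ^ 2 * (4 * ((∫⁻ x, ‖(jap x)⁻¹ • (19 * (M * sobolevNorm h))‖ₑ ^ 2) +
        (∫⁻ x, ‖(jap x)⁻¹ • w x • pdo (derivSnd q) (evolve t h) x‖ₑ ^ 2) +
        ((∫⁻ x, ‖(jap x)⁻¹ • w x • pdo q (evolve t (deriv h)) x‖ₑ ^ 2) +
        ∫⁻ x, ‖w x • pdo q (evolve t h) x‖ₑ ^ 2))) := by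
  have hjap : Measurable fun x => (jap x)⁻¹ := continuous_jap.measurable.inv
  have hconst : Measurable fun x => ‖(jap x)⁻¹ • (19 * (M * sobolevNorm h))‖ₑ ^ 2 :=
    (hjap.smul_const _).enorm.pow_const 2
  have hpdo {r : ℝ → ℝ → ℂ} (hr : IsBoundedSymbol w M r) {f : ℝ → ℂ} (hf : Measurable f) :
      Measurable fun x => ‖(jap x)⁻¹ • w x • pdo r (evolve t f) x‖ₑ ^ 2 :=
    (hjap.smul (hw.continuous.measurable.smul
      (hr.measurable_pdo (measurable_evolve hf t)))).enorm.pow_const 2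
  rw [← lintegral_add_left (hpdo hq.toIsBoundedSymbol (measurable_deriv h)),
    ← lintegral_add_left hconst, ← lintegral_add_left (hconst.fun_add
      (hpdo hq'.toIsBoundedSymbol hh.measurable)),
    ← lintegral_const_mul' _ _ (by finiteness), ← lintegral_const_mul' _ _ (by finiteness)]
  refine lintegral_mono fun x => (pow_le_pow_left'
    (hq.enorm_deriv_pdo_evolve_le hq' hd hw hh ht x) 2).trans ?_
  rw [mul_pow]
  exact mul_le_mul_right (ennreal_add_add_add_sq_le _ _ _ _) _

theorem lintegral_enorm_deriv_pdo_evolve_sq_le (hq : IsSymbol w M q)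
    (hq' : IsSymbol w M (derivSnd q)) (hd : ∀ x, Differentiable ℝ (q x)) (hw : IsWeight w)
    (hh : IsDatum h) (ht : 1 ≤ t) :
    ∫⁻ x, ‖(jap x)⁻¹ • w x • deriv (pdo q (evolve t h)) x‖ₑ ^ 2 ≤
      decayConst * ENNReal.ofReal (((√t)⁻¹ * (M * sobolevNorm h)) ^ 2) := by
  have hconst : ∫⁻ x, ‖(jap x)⁻¹ • (19 * (M * sobolevNorm h))‖ₑ ^ 2 =
      ENNReal.ofReal (361 * Real.pi) * ENNReal.ofReal ((M * sobolevNorm h) ^ 2) := by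
    rw [lintegral_enorm_inv_jap_smul_sq, ← ENNReal.ofReal_mul (by positivity)]
    ring_nf
  have hderivSnd := hq'.lintegral_enorm_inv_jap_smul_pdo_evolve_sq_le hw hh.integrable hh.memLp
    hh.measurable (lintegral_enorm_sq_le_sobolevNorm hh.memLp) t
  have hderiv := hq.lintegral_enorm_inv_jap_smul_pdo_evolve_sq_le hw hh.integrable_deriv
    hh.memLp_deriv (measurable_deriv h) (lintegral_enorm_deriv_sq_le_sobolevNorm hh.memLp_deriv) t
  refine (hq.lintegral_enorm_deriv_pdo_evolve_sq_le_add hq' hd hw hh ht).trans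
    ((mul_le_mul_right (mul_le_mul_right (add_le_add (add_le_add hconst.le hderivSnd)
      (add_le_add hderiv (hq.lintegral_enorm_weight_smul_pdo_evolve_sq_le hq' hd hw hh t)))
        _) _).trans_eq ?_)
  rw [mul_pow (√t)⁻¹, ENNReal.ofReal_mul (p := (√t)⁻¹ ^ 2) (by positivity),
    ENNReal.ofReal_pow (p := (√t)⁻¹) (by positivity),
    ← Real.enorm_of_nonneg (by positivity : 0 ≤ (√t)⁻¹), decayConst]
  ring

theorem sqrt_integral_norm_deriv_pdo_evolve_sq_le (hq : IsSymbol w M q)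
    (hq' : IsSymbol w M (derivSnd q)) (hd : ∀ x, Differentiable ℝ (q x)) (hw : IsWeight w)
    (hh : IsDatum h) (ht : 1 ≤ t) :
    √(∫ x, ‖(jap x)⁻¹ • w x • deriv (pdo q (evolve t h)) x‖ ^ 2) ≤
      √decayConst.toReal * M * (√t)⁻¹ * sobolevNorm h := by
  have hM := hq.nonneg hw
  have hN := sobolevNorm_nonneg h
  refine sqrt_integral_norm_sq_le (by positivity)
    ((hq.lintegral_enorm_deriv_pdo_evolve_sq_le hq' hd hw hh ht).trans_eq ?_)
  rw [show √decayConst.toReal * M * (√t)⁻¹ * sobolevNorm h =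
      √decayConst.toReal * ((√t)⁻¹ * (M * sobolevNorm h)) by ring, mul_pow √_,
    Real.sq_sqrt ENNReal.toReal_nonneg, ENNReal.ofReal_mul ENNReal.toReal_nonneg,
    ENNReal.ofReal_toReal decayConst_ne_top]

end IsSymbol

theorem norm_inv_jap_smul_jap_rpow_smul_sq (β x : ℝ) (z : ℂ) :
    ‖(jap x)⁻¹ • jap x ^ β • z‖ ^ 2 = jap x ^ (2 * (β - 1)) * ‖z‖ ^ 2 := by
  have hjap := jap_pos x
  rw [smul_smul, norm_smul, mul_pow, Real.norm_of_nonneg (by positivity), mul_comm 2,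
    Real.rpow_mul hjap.le, Real.rpow_sub_one hjap.ne', Real.rpow_two]
  ring

end Decay

theorem statement_10_general :
    ∀ M : ℝ, 0 < M → ∃ C : ℝ, 0 < C ∧
      ∀ (β : ℝ) (Q : ℝ → ℝ → ℂ),
      (∀ x : ℝ, Differentiable ℝ (fun k => Q x k)) →
      (∀ k : ℝ, Differentiable ℝ (fun x => Q x k)) →
      (∀ k : ℝ, Differentiable ℝ (fun x => deriv (fun k' => Q x k') k)) →
      (∀ x k : ℝ, jap x ^ β * ‖Q x k‖ ≤ M) →
      (∀ x k : ℝ, jap x ^ β * ‖deriv (fun k' => Q x k') k‖ ≤ M) →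
      (∀ x k : ℝ, jap x ^ β * ‖deriv (fun x' => Q x' k) x‖ ≤ M) →
      (∀ x k : ℝ, jap x ^ β * ‖deriv (fun x' => deriv (fun k' => Q x' k') k) x‖ ≤ M) →
      ∀ t : ℝ, 1 ≤ t → ∀ h : ℝ → ℂ, IsDatum h →
        Real.sqrt (∫ x : ℝ, jap x ^ (2 * (β - 1)) *
            ‖deriv (fun x' : ℝ => ∫ k in Set.Ioi (0 : ℝ),
                Complex.exp (Complex.I * (k : ℂ) * (x' : ℂ)) * Q x' k *
                  Complex.exp (Complex.I * (k : ℂ) ^ 2 * (t : ℂ)) * h k) x‖ ^ 2) ≤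
          C * t ^ (-(1 / 2) : ℝ) *
            Real.sqrt ((∫ k : ℝ, ‖h k‖ ^ 2) + ∫ k : ℝ, ‖deriv h k‖ ^ 2) := by
  intro M hM
  have hK : 0 < √decayConst.toReal :=
    Real.sqrt_pos.mpr (ENNReal.toReal_pos decayConst_ne_zero decayConst_ne_top)
  refine ⟨√decayConst.toReal * M, mul_pos hK hM,
    fun β Q hdk hdx hdkx hb hbk hbx hbkx t ht h hh => ?_⟩
  have hQ : IsSymbol (fun x => jap x ^ β) M Q :=
    .of_bounds (fun x => (hdk x).continuous.measurable) hdx hb hbx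
  have hQ' : IsSymbol (fun x => jap x ^ β) M (derivSnd Q) :=
    .of_bounds (fun x => measurable_deriv (Q x)) hdkx hbk hbkx
  have hflow (x' : ℝ) : ∫ k in Ioi (0 : ℝ), Complex.exp (Complex.I * (k : ℂ) * (x' : ℂ)) * Q x' k *
      Complex.exp (Complex.I * (k : ℂ) ^ 2 * (t : ℂ)) * h k = pdo Q (evolve t h) x' := by
    rw [pdo_evolve, fourierExp_evolve_eq_setIntegral]
    congr 1 with k
    ring
  simp_rw [hflow, ← norm_inv_jap_smul_jap_rpow_smul_sq]
  rw [Real.rpow_neg (by positivity), ← Real.sqrt_eq_rpow]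
  exact hQ.sqrt_integral_norm_deriv_pdo_evolve_sq_le hQ' hdk (isWeight_jap_rpow β) hh ht

/-- Local `L²` decay for the differentiated flow: with symbol bounds
`|⟨x⟩^β ∂_x^j ∂_k^ρ 𝔔(x,k)| ≤ M` and `L² → L²` boundedness (norm `≤ M`) of the PDOs with
symbols `⟨x⟩^β ∂_x^j ∂_k^ρ 𝔔`, one has
`‖⟨x⟩^{β−1} ∂_x ∫_0^∞ e^{ikx} 𝔔(x,k) e^{ik²t} h(k) dk‖_{L²_x} ≤ C t^{−1/2} ‖h‖_{H¹}`
for `t ≥ 1`, with `C` depending only on `M`. -/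
theorem statement_10 :
    ∀ M : ℝ, 0 < M → ∃ C : ℝ, 0 < C ∧
      ∀ (β : ℝ) (Q : ℝ → ℝ → ℂ),
      (∀ x : ℝ, Differentiable ℝ (fun k => Q x k)) →
      (∀ k : ℝ, Differentiable ℝ (fun x => Q x k)) →
      (∀ k : ℝ, Differentiable ℝ (fun x => deriv (fun k' => Q x k') k)) →
      (∀ x k : ℝ, jap x ^ β * ‖Q x k‖ ≤ M) →
      (∀ x k : ℝ, jap x ^ β * ‖deriv (fun k' => Q x k') k‖ ≤ M) →
      (∀ x k : ℝ, jap x ^ β * ‖deriv (fun x' => Q x' k) x‖ ≤ M) →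
      (∀ x k : ℝ, jap x ^ β * ‖deriv (fun x' => deriv (fun k' => Q x' k') k) x‖ ≤ M) →
      (∀ g : SchwartzMap ℝ ℂ,
        Real.sqrt (∫ x : ℝ, ‖∫ k : ℝ, Complex.exp (Complex.I * (k : ℂ) * (x : ℂ)) *
            (jap x ^ β : ℝ) * Q x k * g k‖ ^ 2) ≤ M * Real.sqrt (∫ k : ℝ, ‖g k‖ ^ 2)) →
      (∀ g : SchwartzMap ℝ ℂ,
        Real.sqrt (∫ x : ℝ, ‖∫ k : ℝ, Complex.exp (Complex.I * (k : ℂ) * (x : ℂ)) *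
            (jap x ^ β : ℝ) * deriv (fun k' => Q x k') k * g k‖ ^ 2) ≤
          M * Real.sqrt (∫ k : ℝ, ‖g k‖ ^ 2)) →
      (∀ g : SchwartzMap ℝ ℂ,
        Real.sqrt (∫ x : ℝ, ‖∫ k : ℝ, Complex.exp (Complex.I * (k : ℂ) * (x : ℂ)) *
            (jap x ^ β : ℝ) * deriv (fun x' => Q x' k) x * g k‖ ^ 2) ≤
          M * Real.sqrt (∫ k : ℝ, ‖g k‖ ^ 2)) →
      (∀ g : SchwartzMap ℝ ℂ,
        Real.sqrt (∫ x : ℝ, ‖∫ k : ℝ, Complex.exp (Complex.I * (k : ℂ) * (x : ℂ)) *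
            (jap x ^ β : ℝ) * deriv (fun x' => deriv (fun k' => Q x' k') k) x * g k‖ ^ 2) ≤
          M * Real.sqrt (∫ k : ℝ, ‖g k‖ ^ 2)) →
      ∀ t : ℝ, 1 ≤ t → ∀ h : SchwartzMap ℝ ℂ,
        Real.sqrt (∫ x : ℝ, jap x ^ (2 * (β - 1)) *
            ‖deriv (fun x' : ℝ => ∫ k in Set.Ioi (0:ℝ),
                Complex.exp (Complex.I * (k : ℂ) * (x' : ℂ)) * Q x' k *
                  Complex.exp (Complex.I * (k : ℂ) ^ 2 * (t : ℂ)) * h k) x‖ ^ 2) ≤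
          C * t ^ (-(1/2) : ℝ) *
            Real.sqrt ((∫ k : ℝ, ‖h k‖ ^ 2) + ∫ k : ℝ, ‖deriv (h : ℝ → ℂ) k‖ ^ 2) := fun M hM =>
  have ⟨C, hC, hdecay⟩ := statement_10_general M hM
  ⟨C, hC, fun β Q hdk hdx hdkx hb hbk hbx hbkx _ _ _ _ t ht h =>
    hdecay β Q hdk hdx hdkx hb hbk hbx hbkx t ht h (isDatum_schwartzMap h)⟩
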